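/- arXiv:2306.14863 — 4 statements merged into one kernel-verified Lean document; each statement's English description precedes it below -/
import Mathlib

section
/- Belk–Hyde–Matucci: The rational group ℛ, i.e. the group of rational homeomorphisms of the Cantor space 𝔠 under composition, is not finitely generated. -/
/-- Concatenation of a finite word with an infinite sequence. -/
def wordAppend {A : Type*} (α : List A) (x : ℕ → A) : ℕ → A :=
  fun n => if h : n < α.length then α.get ⟨n, h⟩ else x (n - α.length)

/-- The cone determined by a finite word: all sequences having it as a prefix. -/
def cone {A : Type*} (α : List A) : Set (ℕ → A) := Set.range (wordAppend α)

/-- `g` is the local action of the homeomorphism `f` at the word `α`: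
there is a word `β` with `f (α ⌢ x) = β ⌢ (g x)` for all `x`, and `β` is the longest
common prefix of the image of the cone `C_α` (witnessed by two image points that
differ in the coordinate immediately after `β`). -/
def IsLocalAction {A : Type*} [TopologicalSpace A] (f : (ℕ → A) ≃ₜ (ℕ → A)) (α : List A)
    (g : (ℕ → A) → (ℕ → A)) : Prop :=
  ∃ β : List A, (∀ x, f (wordAppend α x) = wordAppend β (g x)) ∧ ∃ x y, g x 0 ≠ g y 0

/-- A homeomorphism of a Cantor space of sequences is rational if it has only
finitely many distinct local actions. -/
def IsRational {A : Type*} [TopologicalSpace A] (f : (ℕ → A) ≃ₜ (ℕ → A)) : Prop :=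
  {g | ∃ α, IsLocalAction f α g}.Finite

/-- The group of self-homeomorphisms of a topological space, under composition. -/
instance homeoGroup {X : Type*} [TopologicalSpace X] : Group (X ≃ₜ X) where
  mul f g := g.trans f
  one := Homeomorph.refl X
  inv := Homeomorph.symm
  mul_assoc _ _ _ := rfl
  one_mul _ := Homeomorph.ext fun _ => rfl
  mul_one _ := Homeomorph.ext fun _ => rfl
  inv_mul_cancel := Homeomorph.self_trans_symm

/-!
Two sequences are compared by the position of their first difference. At an eventually periodic
point `x`, a rational homeomorphism `f` reads the same local action `g` at two prefixes of `x` which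
differ by `k` periods, where `k` is at most the number of local actions of `f`. If the corresponding
outputs differ by `d` letters, then `d` is an eventual period of `f x`, and `f` multiplies first
differences from `x` by the slope `d / (k * period of x)`, up to a bounded error.

Slopes are multiplicative under composition. For a prime `p` exceeding the number of local actions
of `f` and of `f⁻¹`, the `p`-adic valuation of the slope is therefore exactly
`v_p (period of f x) - v_p (period of x)`, and the homeomorphisms with this property at all
eventually periodic points form a subgroup. Given finitely many rational homeomorphisms, some prime
`p` is large enough for all of them; but exchanging two letters at the multiples of `p` is a
rational homeomorphism with slope `1` that maps a constant sequence to a sequence of period `p`.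
-/

open Filter Function PiNat

local notation:67 α:68 "⌢" x:68 => wordAppend α x

variable {A : Type*}

section Sequences

variable {x y : ℕ → A} {n : ℕ}

/-- The sequence left after deleting the first `n` letters of `x`. -/
def tail (x : ℕ → A) (n : ℕ) : ℕ → A := fun i => x (n + i)

/-- The word formed by the first `n` letters of `x`. -/
def prefixWord (x : ℕ → A) (n : ℕ) : List A := List.ofFn fun i : Fin n => x i

lemma tail_apply (x : ℕ → A) (n i : ℕ) : tail x n i = x (n + i) := rfl

lemma tail_tail (x : ℕ → A) (m n : ℕ) : tail (tail x m) n = tail x (m + n) :=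
  funext fun _ => by simp only [tail_apply, add_assoc]

lemma tail_eq_self_iff_periodic : tail x n = x ↔ Periodic x n := by
  simp only [funext_iff, tail_apply, Periodic, add_comm n]

@[simp]
lemma length_prefixWord (x : ℕ → A) (n : ℕ) : (prefixWord x n).length = n :=
  List.length_ofFn

lemma wordAppend_apply_of_lt {α : List A} (h : n < α.length) (x : ℕ → A) :
    (α ⌢ x) n = α[n] :=
  dif_pos h

@[simp]
lemma tail_wordAppend (α : List A) (x : ℕ → A) : tail (α ⌢ x) α.length = x :=
  funext fun i => by simp [tail, wordAppend]

lemma wordAppend_injective (α : List A) : Injective (wordAppend α) := fun x y h => by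
  rw [← tail_wordAppend α x, h, tail_wordAppend]

@[simp]
lemma tail_prefixWord_append (x y : ℕ → A) (n : ℕ) : tail (prefixWord x n ⌢ y) n = y := by
  simpa only [length_prefixWord] using tail_wordAppend (prefixWord x n) y

lemma prefixWord_append_mem_cylinder (x y : ℕ → A) (n : ℕ) :
    prefixWord x n ⌢ y ∈ cylinder x n := fun i hi => by
  rw [wordAppend_apply_of_lt (by rwa [length_prefixWord])]
  exact List.getElem_ofFn _

lemma prefixWord_append_tail (h : y ∈ cylinder x n) : prefixWord x n ⌢ tail y n = y := by
  funext i
  rcases lt_or_ge i n with hi | hi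
  · rw [prefixWord_append_mem_cylinder x _ n i hi, h i hi]
  · obtain ⟨j, rfl⟩ := Nat.exists_eq_add_of_le hi
    exact congrFun (tail_prefixWord_append x (tail y n) n) j

lemma prefixWord_append_eq_self_iff : prefixWord x n ⌢ y = x ↔ y = tail x n := by
  constructor
  · intro h
    rw [← tail_prefixWord_append x y n, h]
  · rintro rfl
    exact prefixWord_append_tail (self_mem_cylinder x n)

lemma prefixWord_wordAppend (α : List A) (x : ℕ → A) : prefixWord (α ⌢ x) α.length = α :=
  List.ext_getElem (length_prefixWord _ _) fun i _ hi => by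
    simp only [prefixWord, List.getElem_ofFn, wordAppend_apply_of_lt hi]

end Sequences

section FirstDiff

variable {x y : ℕ → A} {n : ℕ}

lemma firstDiff_eq_of_apply_ne (hne : x n ≠ y n) (heq : ∀ i < n, x i = y i) :
    firstDiff x y = n := by
  refine le_antisymm (not_lt.mp fun h => hne (apply_eq_of_lt_firstDiff h)) (not_lt.mp fun h => ?_)
  exact apply_firstDiff_ne (ne_of_apply_ne (· n) hne) (heq _ h)

lemma exists_firstDiff_eq [Nontrivial A] (x : ℕ → A) (n : ℕ) : ∃ y, y ≠ x ∧ firstDiff x y = n := by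
  obtain ⟨a, ha⟩ := exists_ne (x n)
  have hupdate : update x n a n ≠ x n := by rwa [update_self]
  refine ⟨update x n a, ne_of_apply_ne (· n) hupdate, firstDiff_eq_of_apply_ne hupdate.symm ?_⟩
  exact fun i hi => (update_of_ne hi.ne a x).symm

lemma firstDiff_prefixWord_append (h : y ≠ tail x n) :
    firstDiff x (prefixWord x n ⌢ y) = n + firstDiff (tail x n) y := by
  have hadd (i : ℕ) : (prefixWord x n ⌢ y) (n + i) = y i :=
    congrFun (tail_prefixWord_append x y n) i
  refine firstDiff_eq_of_apply_ne ?_ fun i hi => ?_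
  · rw [hadd]
    exact apply_firstDiff_ne h.symm
  · rcases lt_or_ge i n with hin | hin
    · exact (prefixWord_append_mem_cylinder x y n i hin).symm
    · obtain ⟨j, rfl⟩ := Nat.exists_eq_add_of_le hin
      rw [hadd]
      exact apply_eq_of_lt_firstDiff (Nat.lt_of_add_lt_add_left hi)

variable [TopologicalSpace A] [DiscreteTopology A]

lemma exists_mapsTo_cylinder {f : (ℕ → A) → ℕ → A} (hf : ContinuousAt f x) (m : ℕ) :
    ∃ n, Set.MapsTo f (cylinder x n) (cylinder (f x) m) := by
  have hmem : f ⁻¹' cylinder (f x) m ∈ nhds x :=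
    hf ((isOpen_cylinder _ (f x) m).mem_nhds (self_mem_cylinder _ m))
  obtain ⟨_, ⟨z, n, rfl⟩, hx, hsub⟩ :=
    (isTopologicalBasis_cylinders fun _ => A).mem_nhds_iff.mp hmem
  exact ⟨n, mem_cylinder_iff_eq.mp hx ▸ hsub⟩

lemma exists_firstDiff_map_le (f : (ℕ → A) ≃ₜ (ℕ → A)) (x : ℕ → A) (m : ℕ) :
    ∃ C, ∀ y ≠ x, firstDiff x y < m → firstDiff (f x) (f y) ≤ C := by
  obtain ⟨n, hn⟩ := exists_mapsTo_cylinder (f.symm.continuous.continuousAt (x := f x)) m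
  refine ⟨n, fun y hy hlt => not_lt.mp fun hn' => hlt.not_ge ?_⟩
  have hfy : f y ∈ cylinder (f x) n := fun i hi =>
    (apply_eq_of_lt_firstDiff (hi.trans hn')).symm
  have hxy := hn hfy
  simp only [Homeomorph.symm_apply_apply] at hxy
  rwa [mem_cylinder_comm, mem_cylinder_iff_le_firstDiff hy.symm] at hxy

end FirstDiff

section EventualPeriod

variable {x : ℕ → A} {q : ℕ}

/-- The shift map on germs at infinity of sequences. -/
def germShift (u : Germ (atTop : Filter ℕ) A) : Germ (atTop : Filter ℕ) A :=
  u.compTendsto (· + 1) (tendsto_add_atTop_nat 1)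

/-- The least positive eventual period of `x`, or `0` if `x` is not eventually periodic. Eventual
periods of a sequence are the periods of its germ at infinity under the shift. -/
noncomputable def eventualPeriod (x : ℕ → A) : ℕ :=
  minimalPeriod germShift (x : Germ (atTop : Filter ℕ) A)

lemma iterate_germShift_coe (x : ℕ → A) (q : ℕ) :
    germShift^[q] (x : Germ (atTop : Filter ℕ) A) = ((fun n => x (n + q) : ℕ → A) : Germ _ A) := by
  induction q with
  | zero => rfl
  | succ q ih =>
    rw [iterate_succ_apply', ih, germShift, Germ.coe_compTendsto]
    exact congrArg _ (funext fun n => congrArg x (by simp only [add_assoc, add_comm 1]))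

lemma eventualPeriod_dvd_iff : eventualPeriod x ∣ q ↔ ∃ a, Periodic (tail x a) q := by
  rw [eventualPeriod, ← isPeriodicPt_iff_minimalPeriod_dvd, IsPeriodicPt, IsFixedPt,
    iterate_germShift_coe, Germ.coe_eq, EventuallyEq, eventually_atTop]
  refine exists_congr fun a => ⟨fun h i => ?_, fun h n hn => ?_⟩
  · simpa only [tail_apply, add_assoc] using h (a + i) (Nat.le_add_right a i)
  · obtain ⟨i, rfl⟩ := Nat.exists_eq_add_of_le hn
    simpa only [tail_apply, add_assoc] using h i

lemma eventualPeriod_const (a : A) : eventualPeriod (fun _ => a) = 1 :=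
  Nat.dvd_one.mp (eventualPeriod_dvd_iff.mpr ⟨0, fun _ => rfl⟩)

lemma eventualPeriod_ite_dvd {a b : A} (hab : a ≠ b) {p : ℕ} (hp : p ≠ 0) :
    eventualPeriod (fun n => if p ∣ n then a else b) = p := by
  refine Nat.dvd_antisymm (eventualPeriod_dvd_iff.mpr ⟨0, fun n => ?_⟩) ?_
  · simp [tail]
  · obtain ⟨m, hm⟩ := eventualPeriod_dvd_iff.mp (dvd_refl (eventualPeriod fun n =>
      if p ∣ n then a else b))
    have hstart : m ≤ p * m := Nat.le_mul_of_pos_left m (Nat.pos_of_ne_zero hp)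
    have hval := hm (p * m - m)
    rw [tail_apply, tail_apply, ← add_assoc, Nat.add_sub_cancel' hstart,
      if_pos (dvd_mul_right p m), ite_eq_left_iff] at hval
    by_contra hndvd
    exact hab.symm (hval ((Nat.dvd_add_right (dvd_mul_right p m)).not.mpr hndvd))

end EventualPeriod

section Slope

variable {f g : (ℕ → A) → ℕ → A} {x : ℕ → A} {s t : ℚ}

/-- `f` multiplies the position of the first difference from `x` by `s`, up to a bounded error. The
point `y = x` is excluded because `firstDiff x x = 0` by convention. -/
def HasSlope (f : (ℕ → A) → ℕ → A) (x : ℕ → A) (s : ℚ) : Prop :=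
  ∃ C : ℚ, ∀ y ≠ x, |(firstDiff (f x) (f y) : ℚ) - s * firstDiff x y| ≤ C

lemma hasSlope_one_of_firstDiff_eq (h : ∀ y, firstDiff (f x) (f y) = firstDiff x y) :
    HasSlope f x 1 :=
  ⟨0, fun y _ => by simp [h]⟩

namespace HasSlope

lemma unique [Nontrivial A] (hs : HasSlope f x s) (ht : HasSlope f x t) : s = t := by
  obtain ⟨C, hC⟩ := hs
  obtain ⟨D, hD⟩ := ht
  have hbound (n : ℕ) : |s - t| * n ≤ C + D := by
    obtain ⟨y, hyx, rfl⟩ := exists_firstDiff_eq x n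
    calc |s - t| * (firstDiff x y : ℚ)
        = |((firstDiff (f x) (f y) : ℚ) - t * firstDiff x y) -
            (firstDiff (f x) (f y) - s * firstDiff x y)| := by
          rw [← Nat.abs_cast (firstDiff x y), ← abs_mul, Nat.abs_cast]
          ring_nf
      _ ≤ D + C := (abs_sub _ _).trans (add_le_add (hD y hyx) (hC y hyx))
      _ = C + D := add_comm D C
  by_contra hne
  have hpos : 0 < |s - t| := abs_sub_pos.mpr hne
  obtain ⟨n, hn⟩ := exists_nat_gt ((C + D) / |s - t|)
  rw [div_lt_iff₀' hpos] at hn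
  exact (hbound n).not_gt hn

lemma comp (hg : HasSlope g (f x) t) (hf : HasSlope f x s) (hinj : Injective f) :
    HasSlope (g ∘ f) x (t * s) := by
  obtain ⟨C, hC⟩ := hf
  obtain ⟨D, hD⟩ := hg
  refine ⟨D + |t| * C, fun y hy => ?_⟩
  calc |(firstDiff (g (f x)) (g (f y)) : ℚ) - t * s * firstDiff x y|
      = |(firstDiff (g (f x)) (g (f y)) - t * firstDiff (f x) (f y)) +
          t * (firstDiff (f x) (f y) - s * firstDiff x y)| := by ring_nf
    _ ≤ D + |t| * C := by
      refine (abs_add_le _ _).trans (add_le_add (hD _ (hinj.ne hy)) ?_)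
      rw [abs_mul]
      exact mul_le_mul_of_nonneg_left (hC y hy) (abs_nonneg t)

lemma symm {e : (ℕ → A) ≃ (ℕ → A)} (hs : s ≠ 0) (h : HasSlope e x s) :
    HasSlope e.symm (e x) s⁻¹ := by
  obtain ⟨C, hC⟩ := h
  refine ⟨|s⁻¹| * C, fun z hz => ?_⟩
  obtain ⟨y, rfl⟩ := e.surjective z
  rw [e.symm_apply_apply, e.symm_apply_apply]
  calc |(firstDiff x y : ℚ) - s⁻¹ * firstDiff (e x) (e y)|
      = |s⁻¹| * |firstDiff (e x) (e y) - s * firstDiff x y| := by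
        rw [← abs_mul, mul_sub, inv_mul_cancel_left₀ hs, abs_sub_comm]
    _ ≤ |s⁻¹| * C := mul_le_mul_of_nonneg_left (hC y (ne_of_apply_ne e hz)) (abs_nonneg _)

end HasSlope

-- The error `firstDiff (f x) (f y) - d / c * firstDiff x y` does not change in a reduction step, so
-- it is enough to bound it where `firstDiff x y < m`.
lemma hasSlope_div_of_reduction [TopologicalSpace A] [DiscreteTopology A]
    (f : (ℕ → A) ≃ₜ (ℕ → A)) (x : ℕ → A) (m : ℕ) {c d : ℕ} (hc : c ≠ 0)
    (hred : ∀ y ≠ x, m ≤ firstDiff x y → ∃ y' ≠ x, firstDiff x y = firstDiff x y' + c ∧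
      firstDiff (f x) (f y) = firstDiff (f x) (f y') + d) :
    HasSlope f x (d / c) := by
  obtain ⟨C, hC⟩ := exists_firstDiff_map_le f x m
  have hc' : (c : ℚ) ≠ 0 := Nat.cast_ne_zero.mpr hc
  refine ⟨C + d / c * m, fun y hy => ?_⟩
  induction hk : firstDiff x y using Nat.strong_induction_on generalizing y with
  | _ k ih =>
    subst hk
    rcases lt_or_ge (firstDiff x y) m with hlt | hge
    · have hfirst : (firstDiff (f x) (f y) : ℚ) ≤ C := Nat.cast_le.mpr (hC y hy hlt)
      have hsecond : (d / c : ℚ) * firstDiff x y ≤ d / c * m := by gcongr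
      calc |(firstDiff (f x) (f y) : ℚ) - d / c * firstDiff x y|
          ≤ |(firstDiff (f x) (f y) : ℚ)| + |(d / c : ℚ) * firstDiff x y| := abs_sub _ _
        _ = firstDiff (f x) (f y) + d / c * firstDiff x y := by
          rw [abs_of_nonneg (by positivity), abs_of_nonneg (by positivity)]
        _ ≤ C + d / c * m := add_le_add hfirst hsecond
    · obtain ⟨y', hy', hxy, hfxy⟩ := hred y hy hge
      have hshift : (firstDiff (f x) (f y) : ℚ) - d / c * firstDiff x y =
          firstDiff (f x) (f y') - d / c * firstDiff x y' := by
        rw [hxy, hfxy]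
        push_cast
        field_simp
        ring
      rw [hshift]
      exact ih _ (by omega) y' hy' rfl

end Slope

section LocalAction

/-- `f` carries the prefix of `x` of length `m` to the prefix of `f x` of length `n` and acts by `g`
on what follows, and `n` is maximal. This is `IsLocalAction` at a prefix of `x`, with the longest
common prefix recorded by its length. -/
structure IsTailAction (f : (ℕ → A) → ℕ → A) (x : ℕ → A) (m n : ℕ) (g : (ℕ → A) → ℕ → A) :
    Prop where
  map_append : ∀ y, f (prefixWord x m ⌢ y) = prefixWord (f x) n ⌢ g y
  exists_apply_ne : ∃ y z, g y 0 ≠ g z 0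

namespace IsTailAction

variable {f g g' : (ℕ → A) → ℕ → A} {x : ℕ → A} {a a' b b' c d : ℕ}

lemma tail_map (h : IsTailAction f x a b g) : tail (f x) b = g (tail x a) := by
  calc tail (f x) b = tail (f (prefixWord x a ⌢ tail x a)) b := by
        rw [prefixWord_append_tail (self_mem_cylinder x a)]
    _ = g (tail x a) := by rw [h.map_append, tail_prefixWord_append]

lemma prefix_length_le (h : IsTailAction f x a b g) (h' : IsTailAction f x a' b' g')
    (ha : a ≤ a') : b ≤ b' := by
  by_contra! hlt
  have hconst (y : ℕ → A) : g' y 0 = f x b' := by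
    have hmem : prefixWord x a' ⌢ y ∈ cylinder x a :=
      cylinder_anti x ha (prefixWord_append_mem_cylinder x y _)
    calc g' y 0 = tail (prefixWord (f x) b' ⌢ g' y) b' 0 := by rw [tail_prefixWord_append]
      _ = f (prefixWord x a' ⌢ y) b' := by rw [← h'.map_append]; rfl
      _ = (prefixWord (f x) b ⌢ g (tail (prefixWord x a' ⌢ y) a)) b' := by
        rw [← h.map_append, prefixWord_append_tail hmem]
      _ = f x b' := prefixWord_append_mem_cylinder _ _ _ _ hlt
  obtain ⟨y, z, hyz⟩ := h'.exists_apply_ne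
  exact hyz ((hconst y).trans (hconst z).symm)

lemma prefix_length_lt [Nontrivial A] (h : IsTailAction f x a b g)
    (h' : IsTailAction f x a' b' g) (hf : Injective f) (ha : a < a') : b < b' := by
  refine (h.prefix_length_le h' ha.le).lt_of_ne ?_
  rintro rfl
  obtain ⟨y, hy⟩ := exists_ne (x a)
  have heq : prefixWord x a ⌢ (fun _ => y) = prefixWord x a' ⌢ (fun _ => y) :=
    hf ((h.map_append _).trans (h'.map_append _).symm)
  have hval := congrFun (tail_prefixWord_append x (fun _ => y) a) 0
  rw [heq, tail_apply, add_zero, prefixWord_append_mem_cylinder x _ _ _ ha] at hval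
  exact hy hval.symm

lemma periodic_tail_map (h : IsTailAction f x a b g) (h' : IsTailAction f x (a + c) (b + d) g)
    (hx : Periodic (tail x a) c) : Periodic (tail (f x) b) d := by
  rw [← tail_eq_self_iff_periodic, tail_tail] at hx ⊢
  rw [h'.tail_map, hx, h.tail_map]

end IsTailAction

lemma firstDiff_prefixWord_append_add {x w : ℕ → A} {a c : ℕ} (hx : Periodic (tail x a) c)
    (hw : w ≠ tail x a) :
    firstDiff x (prefixWord x (a + c) ⌢ w) = firstDiff x (prefixWord x a ⌢ w) + c := by
  rw [← tail_eq_self_iff_periodic, tail_tail] at hx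
  rw [firstDiff_prefixWord_append hw, firstDiff_prefixWord_append (hx.symm ▸ hw), hx]
  ring

variable [TopologicalSpace A] {f : (ℕ → A) ≃ₜ (ℕ → A)} {g : (ℕ → A) → ℕ → A} {x : ℕ → A}

lemma IsTailAction.hasSlope_div [DiscreteTopology A] {a b c d : ℕ} (h : IsTailAction f x a b g)
    (h' : IsTailAction f x (a + c) (b + d) g) (hx : Periodic (tail x a) c) (hc : c ≠ 0) :
    HasSlope f x (d / c) := by
  refine hasSlope_div_of_reduction f x (a + c) hc fun y hy hle => ?_
  obtain ⟨w, rfl⟩ : ∃ w, prefixWord x (a + c) ⌢ w = y :=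
    ⟨_, prefixWord_append_tail
      ((mem_cylinder_comm _ _ _).mp ((mem_cylinder_iff_le_firstDiff hy.symm _).mpr hle))⟩
  have hw : w ≠ tail x a := by
    rwa [ne_eq, prefixWord_append_eq_self_iff, ← tail_tail,
      tail_eq_self_iff_periodic.mpr hx] at hy
  have hne : prefixWord x a ⌢ w ≠ x := prefixWord_append_eq_self_iff.not.mpr hw
  refine ⟨prefixWord x a ⌢ w, hne, firstDiff_prefixWord_append_add hx hw, ?_⟩
  rw [h.map_append, h'.map_append]
  refine firstDiff_prefixWord_append_add (h.periodic_tail_map h' hx) ?_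
  rw [ne_eq, ← prefixWord_append_eq_self_iff, ← h.map_append]
  exact f.injective.ne hne

lemma IsLocalAction.exists_isTailAction {m : ℕ} (h : IsLocalAction f (prefixWord x m) g) :
    ∃ n, IsTailAction f x m n g := by
  obtain ⟨β, hβ, hne⟩ := h
  have hfx := hβ (tail x m)
  rw [prefixWord_append_tail (self_mem_cylinder x m)] at hfx
  refine ⟨β.length, fun y => ?_, hne⟩
  rw [hfx, prefixWord_wordAppend, hβ]

lemma exists_isLocalAction [Nontrivial A] (f : (ℕ → A) ≃ₜ (ℕ → A)) (α : List A) :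
    ∃ g, IsLocalAction f α g := by
  classical
  have hdiff : ∃ n y z, f (α ⌢ y) n ≠ f (α ⌢ z) n := by
    obtain ⟨y, z, hyz⟩ := exists_pair_ne (ℕ → A)
    obtain ⟨n, hn⟩ := ne_iff.mp ((f.injective.comp (wordAppend_injective α)).ne hyz)
    exact ⟨n, y, z, hn⟩
  obtain ⟨y₀, z₀, hne⟩ := Nat.find_spec hdiff
  set n := Nat.find hdiff
  refine ⟨fun y => tail (f (α ⌢ y)) n, prefixWord (f (α ⌢ y₀)) n, fun y => ?_, y₀, z₀, hne⟩
  refine (prefixWord_append_tail fun i hi => ?_).symm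
  by_contra hi'
  exact Nat.find_min hdiff hi ⟨y, y₀, hi'⟩

/-- The set of local actions of `f`, which `IsRational f` asserts to be finite. -/
def localActions (f : (ℕ → A) ≃ₜ (ℕ → A)) : Set ((ℕ → A) → ℕ → A) :=
  {g | ∃ α, IsLocalAction f α g}

lemma IsRational.exists_isLocalAction_repeat [Nontrivial A] (hf : IsRational f)
    (α : ℕ → List A) : ∃ i k g, k ≠ 0 ∧ k ≤ (localActions f).ncard ∧
      IsLocalAction f (α i) g ∧ IsLocalAction f (α (i + k)) g := by
  choose g hg using fun i => exists_isLocalAction f (α i)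
  have hcard : (localActions f).ncard < (Set.Iio ((localActions f).ncard + 1)).ncard := by
    simp
  obtain ⟨i, hi, j, hj, hij, heq⟩ :=
    Set.exists_ne_map_eq_of_ncard_lt_of_maps_to hcard (fun i _ => ⟨α i, hg i⟩) hf
  wlog hlt : i < j generalizing i j
  · exact this j hj i hi hij.symm heq.symm (by omega)
  obtain ⟨k, rfl⟩ := Nat.exists_eq_add_of_le hlt.le
  rw [Set.mem_Iio] at hj
  exact ⟨i, k, g i, by omega, by omega, hg i, heq ▸ hg (i + k)⟩

end LocalAction

section SlopeSubgroup

/-- `f` has a slope at `x` whose `p`-adic valuation is the difference of the valuations of the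
eventual periods of `f x` and `x`. -/
def SlopeMatchesPeriods (p : ℕ) (f : (ℕ → A) → ℕ → A) (x : ℕ → A) : Prop :=
  ∃ s, s ≠ 0 ∧ HasSlope f x s ∧
    padicValRat p s = padicValNat p (eventualPeriod (f x)) - padicValNat p (eventualPeriod x)

/-- The homeomorphisms that preserve eventual periodicity in both directions and whose slopes at
eventually periodic points match the eventual periods up to `p`-adic units. -/
def slopeSubgroup (A : Type*) [TopologicalSpace A] (p : ℕ) [Fact p.Prime] :
    Subgroup ((ℕ → A) ≃ₜ (ℕ → A)) where
  carrier := {f | ∀ x, (eventualPeriod (f x) = 0 ↔ eventualPeriod x = 0) ∧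
    (eventualPeriod x ≠ 0 → SlopeMatchesPeriods p f x)}
  one_mem' x := ⟨Iff.rfl, fun _ =>
    ⟨1, one_ne_zero, hasSlope_one_of_firstDiff_eq fun _ => rfl, by
      rw [padicValRat.one]; exact (sub_self _).symm⟩⟩
  mul_mem' {f g} hf hg x := by
    refine ⟨(hf (g x)).1.trans (hg x).1, fun hx => ?_⟩
    obtain ⟨s, hs0, hs, hsval⟩ := (hg x).2 hx
    obtain ⟨t, ht0, ht, htval⟩ := (hf (g x)).2 ((hg x).1.not.mpr hx)
    refine ⟨t * s, mul_ne_zero ht0 hs0, ht.comp hs g.injective, ?_⟩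
    rw [padicValRat.mul ht0 hs0, hsval, htval]
    exact sub_add_sub_cancel _ _ _
  inv_mem' {f} hf z := by
    obtain ⟨x, rfl⟩ := f.surjective z
    have hinv : f⁻¹ (f x) = x := f.symm_apply_apply x
    rw [hinv]
    refine ⟨(hf x).1.symm, fun hx => ?_⟩
    obtain ⟨s, hs0, hs, hsval⟩ := (hf x).2 ((hf x).1.not.mp hx)
    refine ⟨s⁻¹, inv_ne_zero hs0, hs.symm (e := f.toEquiv) hs0, ?_⟩
    rw [padicValRat.inv, hsval, hinv, neg_sub]

end SlopeSubgroup

section Rational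

variable [TopologicalSpace A] [DiscreteTopology A] [Nontrivial A] {f : (ℕ → A) ≃ₜ (ℕ → A)}
  {x : ℕ → A} {p : ℕ}

lemma IsRational.exists_hasSlope_div (hf : IsRational f) (hx : eventualPeriod x ≠ 0) :
    ∃ k d : ℕ, k ≠ 0 ∧ k ≤ (localActions f).ncard ∧ d ≠ 0 ∧ eventualPeriod (f x) ∣ d ∧
      HasSlope f x (d / (k * eventualPeriod x : ℕ)) := by
  obtain ⟨m, hm⟩ := eventualPeriod_dvd_iff.mp (dvd_refl (eventualPeriod x))
  obtain ⟨i, k, g, hk, hkcard, hi, hik⟩ :=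
    hf.exists_isLocalAction_repeat fun i => prefixWord x (m + i * eventualPeriod x)
  set a := m + i * eventualPeriod x
  set c := k * eventualPeriod x
  have hc : c ≠ 0 := mul_ne_zero hk hx
  have hmul (j : ℕ) : Periodic (tail x m) (j * eventualPeriod x) := hm.nsmul j
  have hloop : Periodic (tail x a) c := by
    rw [← tail_tail, tail_eq_self_iff_periodic.mpr (hmul i)]
    exact hmul k
  rw [add_mul, ← add_assoc] at hik
  obtain ⟨b, hb⟩ := hi.exists_isTailAction
  obtain ⟨b', hb'⟩ := hik.exists_isTailAction
  have hlt : b < b' :=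
    hb.prefix_length_lt hb' f.injective (Nat.lt_add_of_pos_right (Nat.pos_of_ne_zero hc))
  obtain ⟨d, rfl⟩ := Nat.exists_eq_add_of_le hlt.le
  exact ⟨k, d, hk, hkcard, by omega,
    eventualPeriod_dvd_iff.mpr ⟨b, hb.periodic_tail_map hb' hloop⟩,
    hb.hasSlope_div hb' hloop hc⟩

variable [Fact p.Prime]

lemma IsRational.exists_hasSlope_le_padicValRat (hf : IsRational f)
    (hp : (localActions f).ncard < p) (hx : eventualPeriod x ≠ 0) :
    eventualPeriod (f x) ≠ 0 ∧ ∃ s, s ≠ 0 ∧ HasSlope f x s ∧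
      (padicValNat p (eventualPeriod (f x)) : ℤ) ≤
        padicValRat p s + padicValNat p (eventualPeriod x) := by
  obtain ⟨k, d, hk, hkcard, hd, hdvd, hslope⟩ := hf.exists_hasSlope_div hx
  have hkx : k * eventualPeriod x ≠ 0 := mul_ne_zero hk hx
  have hvalk : padicValNat p k = 0 :=
    padicValNat.eq_zero_of_not_dvd fun h => by
      have := Nat.le_of_dvd (Nat.pos_of_ne_zero hk) h
      omega
  have hvald : padicValNat p (eventualPeriod (f x)) ≤ padicValNat p d :=
    (padicValNat_dvd_iff_le hd).mp (pow_padicValNat_dvd.trans hdvd)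
  refine ⟨ne_zero_of_dvd_ne_zero hd hdvd, _,
    div_ne_zero (Nat.cast_ne_zero.mpr hd) (Nat.cast_ne_zero.mpr hkx), hslope, ?_⟩
  rw [padicValRat.div (Nat.cast_ne_zero.mpr hd) (Nat.cast_ne_zero.mpr hkx), padicValRat.of_nat,
    padicValRat.of_nat, padicValNat.mul hk hx, hvalk]
  omega

lemma mem_slopeSubgroup_of_ncard_lt (hf : IsRational f) (hf' : IsRational f⁻¹)
    (hp : (localActions f).ncard < p) (hp' : (localActions f⁻¹).ncard < p) :
    f ∈ slopeSubgroup A p := by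
  intro x
  have hinv : f⁻¹ (f x) = x := f.symm_apply_apply x
  have hforward := hf.exists_hasSlope_le_padicValRat (x := x) hp
  have hbackward := hf'.exists_hasSlope_le_padicValRat (x := f x) hp'
  rw [hinv] at hbackward
  refine ⟨not_iff_not.mp ⟨fun h => (hbackward h).1, fun h => (hforward h).1⟩, fun hx => ?_⟩
  obtain ⟨hfx, s, hs0, hs, hsval⟩ := hforward hx
  obtain ⟨-, t, -, ht, htval⟩ := hbackward hfx
  have htinv : t = s⁻¹ := ht.unique (hs.symm (e := f.toEquiv) hs0)
  rw [htinv, padicValRat.inv] at htval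
  exact ⟨s, hs0, hs, by omega⟩

end Rational

section LetterPermutations

variable [TopologicalSpace A]

lemma firstDiff_piCongrRight (σ : ℕ → A ≃ₜ A) (x y : ℕ → A) :
    firstDiff (Homeomorph.piCongrRight σ x) (Homeomorph.piCongrRight σ y) = firstDiff x y := by
  rcases eq_or_ne x y with rfl | hxy
  · simp [firstDiff_def]
  · exact firstDiff_eq_of_apply_ne ((σ _).injective.ne (apply_firstDiff_ne hxy))
      fun i hi => congrArg (σ i) (apply_eq_of_lt_firstDiff hi)

lemma IsLocalAction.eq_piCongrRight_tail {σ : ℕ → A ≃ₜ A} {α : List A} {g : (ℕ → A) → ℕ → A}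
    (h : IsLocalAction (Homeomorph.piCongrRight σ) α g) :
    g = Homeomorph.piCongrRight (tail σ α.length) := by
  obtain ⟨β, hβ, y, z, hyz⟩ := h
  have hcoord (x : ℕ → A) (n : ℕ) : σ n ((α ⌢ x) n) = (β ⌢ g x) n := congrFun (hβ x) n
  have hα (x : ℕ → A) (n : ℕ) : (α ⌢ x) (α.length + n) = x n := congrFun (tail_wordAppend α x) n
  have hβ' (x : ℕ → A) (n : ℕ) : (β ⌢ x) (β.length + n) = x n := congrFun (tail_wordAppend β x) n
  have hlen : β.length = α.length := by
    rcases lt_trichotomy β.length α.length with hlt | heq | hgt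
    · refine absurd ?_ hyz
      rw [← hβ' (g y), ← hβ' (g z), add_zero, ← hcoord, ← hcoord, wordAppend_apply_of_lt hlt,
        wordAppend_apply_of_lt hlt]
    · exact heq
    · have hconst (x : ℕ → A) : σ α.length (x 0) = β[α.length] := by
        rw [← wordAppend_apply_of_lt hgt (g x), ← hcoord]
        exact congrArg _ (hα x 0).symm
      have := (hconst fun _ => g y 0).trans (hconst fun _ => g z 0).symm
      exact absurd ((σ α.length).injective this) hyz
  funext x n
  calc g x n = (β ⌢ g x) (α.length + n) := by rw [← hlen, hβ']
    _ = σ (α.length + n) ((α ⌢ x) (α.length + n)) := (hcoord x _).symm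
    _ = tail σ α.length n (x n) := by rw [hα, tail_apply]

lemma isRational_piCongrRight {σ : ℕ → A ≃ₜ A} {p : ℕ} (hσ : Periodic σ p) (hp : p ≠ 0) :
    IsRational (Homeomorph.piCongrRight σ) := by
  refine ((Set.finite_Iio p).image fun i => ⇑(Homeomorph.piCongrRight (tail σ i))).subset ?_
  rintro g ⟨α, hα⟩
  refine ⟨α.length % p, Nat.mod_lt _ (Nat.pos_of_ne_zero hp), ?_⟩
  have htail : tail σ (α.length % p) = tail σ α.length := funext fun n => by
    rw [tail_apply, tail_apply, ← hσ.map_mod_nat, Nat.mod_add_mod, hσ.map_mod_nat]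
  rw [hα.eq_piCongrRight_tail, ← htail]

variable [DiscreteTopology A]

open Classical in
/-- The homeomorphism exchanging the letters `a` and `b` at the positions divisible by `p`. -/
noncomputable def swapAtMultiples (a b : A) (p : ℕ) : (ℕ → A) ≃ₜ (ℕ → A) :=
  Homeomorph.piCongrRight fun n =>
    if p ∣ n then (Equiv.swap a b).toHomeomorphOfDiscrete else Homeomorph.refl A

lemma isRational_swapAtMultiples (a b : A) {p : ℕ} (hp : p ≠ 0) :
    IsRational (swapAtMultiples a b p) :=
  isRational_piCongrRight (fun n => by simp only [Nat.dvd_add_self_right]) hp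

lemma swapAtMultiples_const (a b : A) (p : ℕ) :
    swapAtMultiples a b p (fun _ => a) = fun n => if p ∣ n then b else a := by
  classical
  funext n
  change (if p ∣ n then (Equiv.swap a b).toHomeomorphOfDiscrete else Homeomorph.refl A) a = _
  split_ifs
  · exact Equiv.swap_apply_left a b
  · rfl

lemma swapAtMultiples_notMem_slopeSubgroup {a b : A} (hab : a ≠ b) {p : ℕ} [hp : Fact p.Prime] :
    swapAtMultiples a b p ∉ slopeSubgroup A p := by
  have : Nontrivial A := ⟨a, b, hab⟩
  intro hmem
  obtain ⟨s, -, hs, hsval⟩ := (hmem fun _ => a).2 (by simp [eventualPeriod_const])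
  have hs1 : s = 1 := hs.unique (hasSlope_one_of_firstDiff_eq (firstDiff_piCongrRight _ _))
  rw [swapAtMultiples_const, eventualPeriod_ite_dvd hab.symm hp.out.ne_zero, eventualPeriod_const,
    hs1, padicValRat.one, padicValNat_self, padicValNat_one_right] at hsval
  omega

end LetterPermutations

theorem rational_group_not_finitely_generated_general [TopologicalSpace A] [DiscreteTopology A]
    [Nontrivial A] (R : Subgroup ((ℕ → A) ≃ₜ (ℕ → A))) (hR : ∀ f, f ∈ R ↔ IsRational f) :
    ¬ Group.FG ↥R := by
  intro hfg
  obtain ⟨S, rfl, hS⟩ := (Subgroup.fg_iff R).mp ((Group.fg_iff_subgroup_fg R).mp hfg)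
  obtain ⟨N, hN⟩ := (hS.image fun f => max (localActions f).ncard (localActions f⁻¹).ncard).bddAbove
  obtain ⟨p, hNp, hp⟩ := Nat.exists_infinite_primes (N + 1)
  have : Fact p.Prime := ⟨hp⟩
  have hle : Subgroup.closure S ≤ slopeSubgroup A p := by
    refine (Subgroup.closure_le _).mpr fun f hf => ?_
    have hfS : f ∈ Subgroup.closure S := Subgroup.subset_closure hf
    have hcard := max_le_iff.mp (hN ⟨f, hf, rfl⟩)
    exact mem_slopeSubgroup_of_ncard_lt ((hR f).mp hfS) ((hR _).mp (inv_mem hfS))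
      (hcard.1.trans_lt hNp) (hcard.2.trans_lt hNp)
  obtain ⟨a, b, hab⟩ := exists_pair_ne A
  exact swapAtMultiples_notMem_slopeSubgroup hab
    (hle ((hR _).mpr (isRational_swapAtMultiples a b hp.ne_zero)))

/-!
Belk–Hyde–Matucci: the rational group `ℛ`, i.e. the group of rational
homeomorphisms of the Cantor space `ℕ → Bool` under composition, is not
finitely generated.
-/
theorem rational_group_not_finitely_generated
    (R : Subgroup ((ℕ → Bool) ≃ₜ (ℕ → Bool)))
    (hR : ∀ f, f ∈ R ↔ IsRational f) :
    ¬ Group.FG ↥R :=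
  rational_group_not_finitely_generated_general R hR
end

section
/- Belk–Zaremsky: For every nonempty countable set S and every group G of permutations of S, the twisted Brin–Thompson group SV_G is a simple group. -/
/-- Membership in Thompson's group `V` over the alphabet `A`: `f` carries a finite
partition of the space into cones onto another such partition by prefix replacement. -/
def InThompsonV {A : Type*} [TopologicalSpace A] (f : (ℕ → A) ≃ₜ (ℕ → A)) : Prop :=
  ∃ (k : ℕ) (αs βs : Fin k → List A),
    (⋃ i, cone (αs i)) = Set.univ ∧ Pairwise (Function.onFun Disjoint (cone ∘ αs)) ∧
    (⋃ i, cone (βs i)) = Set.univ ∧ Pairwise (Function.onFun Disjoint (cone ∘ βs)) ∧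
    ∀ i x, f (wordAppend (αs i) x) = wordAppend (βs i) x

/-- A homeomorphism is piecewise-`W` if some finite partition of the space into clopen
sets has `f` agreeing with a member of `W` on each piece. -/
def IsPiecewise {X : Type*} [TopologicalSpace X] (W : Set (X ≃ₜ X)) (f : X ≃ₜ X) : Prop :=
  ∃ (k : ℕ) (P : Fin k → Set X), (∀ i, IsClopen (P i)) ∧ (⋃ i, P i) = Set.univ ∧
    Pairwise (Function.onFun Disjoint P) ∧ ∀ i, ∃ w ∈ W, ∀ x ∈ P i, f x = w x

/-- The set of homeomorphisms of `𝔠^S = S → (ℕ → Bool)` given by the natural action of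
the restricted wreath product `W = (⊕_{s ∈ S} V) ⋊ G`: a finitely supported family of
elements of Thompson's group `V` acting coordinatewise, composed with a permutation
`σ ∈ G` of the coordinates. -/
def WreathSet (S : Type*) (G : Subgroup (Equiv.Perm S)) :
    Set ((S → ℕ → Bool) ≃ₜ (S → ℕ → Bool)) :=
  {f | ∃ σ ∈ G, ∃ v : S → ((ℕ → Bool) ≃ₜ (ℕ → Bool)),
      (∀ s, InThompsonV (v s)) ∧
      {s | v s ≠ Homeomorph.refl (ℕ → Bool)}.Finite ∧
      ∀ (x : S → ℕ → Bool) (s : S), f x s = v s (x (σ⁻¹ s))}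

/-!
Let `Γ` be the group and let `glue s (g₀, g₁)` act by `g₀` and `g₁` on the two halves of `𝔠^S`
determined by the first bit of the coordinate `s`. A homomorphism `π` on `Γ` is trivial as soon as
its kernel is closed under gluing and contains every `f` for which `π f` is conjugate to `π (glue
s (f, f))`. Indeed, the transposition `a` of the first two bits of a coordinate is conjugate to
`glue s (a, a)` by the braid relation; the maps moving a first bit from one coordinate to another,
or behind a prescribed set of prefixes, are then in the kernel too; and an arbitrary `f` differs
from `glue s (f, f)` only by such maps, because `f` locally replaces prefixes and permutes
coordinates.

Applied to the abelianization, where all copies of `g` supported in proper bricks have the same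
image, the criterion shows that `Γ` is perfect. If `n ≠ 1` is in the kernel of `π`, then `n`
displaces a brick, so the `π`-image of the copy of `Γ` supported there is abelian, hence trivial;
all copies in proper bricks being conjugate, every `glue s g` is in the kernel, and the criterion
applies again.
-/

namespace TwistedBrinThompson

open Topology Function

section Gluing

variable {ι X Y Z : Type*} [Finite ι] [TopologicalSpace X] [CompactSpace X]
variable [TopologicalSpace Y] [T2Space Y] [TopologicalSpace Z] [T2Space Z]

theorem exists_homeomorph_of_bijective {a : ι → X → Y} {b : ι → X → Z}
    (ha : ∀ i, Continuous (a i)) (ha' : Bijective fun p : ι × X => a p.1 p.2)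
    (hb : ∀ i, Continuous (b i)) (hb' : Bijective fun p : ι × X => b p.1 p.2) :
    ∃ f : Y ≃ₜ Z, ∀ i x, f (a i x) = b i x := by
  let _ : TopologicalSpace ι := ⊥
  have : DiscreteTopology ι := ⟨rfl⟩
  let homeoA : ι × X ≃ₜ Y := Continuous.homeoOfEquivCompactToT2 (f := Equiv.ofBijective _ ha')
    (continuous_prod_of_discrete_left.2 ha)
  let homeoB : ι × X ≃ₜ Z := Continuous.homeoOfEquivCompactToT2 (f := Equiv.ofBijective _ hb')
    (continuous_prod_of_discrete_left.2 hb)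
  exact ⟨homeoA.symm.trans homeoB, fun i x =>
    congrArg homeoB (homeoA.symm_apply_apply (i, x))⟩

end Gluing

section Words

variable {A : Type*}

@[simp]
theorem wordAppend_nil (x : ℕ → A) : wordAppend [] x = x := by
  funext n
  simp [wordAppend]

@[simp]
theorem wordAppend_cons_zero (a : A) (α : List A) (x : ℕ → A) : wordAppend (a :: α) x 0 = a := rfl

@[simp]
theorem wordAppend_cons_succ (a : A) (α : List A) (x : ℕ → A) (n : ℕ) :
    wordAppend (a :: α) x (n + 1) = wordAppend α x n := by
  simp [wordAppend]

theorem wordAppend_cons (a : A) (α : List A) (x : ℕ → A) :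
    wordAppend (a :: α) x = wordAppend [a] (wordAppend α x) := by
  funext n
  cases n <;> simp

theorem wordAppend_singleton_tail (x : ℕ → A) : wordAppend [x 0] (fun n => x (n + 1)) = x := by
  funext n
  cases n <;> simp

theorem wordAppend_injective (α : List A) : Injective (wordAppend α) := by
  intro x y hxy
  funext n
  simpa [wordAppend] using congrFun hxy (n + α.length)

theorem mem_cone_cons {a : A} {α : List A} {x : ℕ → A} :
    x ∈ cone (a :: α) ↔ x 0 = a ∧ (fun n => x (n + 1)) ∈ cone α := by
  constructor
  · rintro ⟨y, rfl⟩
    exact ⟨rfl, y, by simp⟩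
  · rintro ⟨rfl, y, hy⟩
    exact ⟨y, by rw [wordAppend_cons, hy, wordAppend_singleton_tail]⟩

@[simp]
theorem cone_nil : cone ([] : List A) = Set.univ :=
  Set.eq_univ_of_forall fun x => ⟨x, wordAppend_nil x⟩

theorem cone_ofFn (x : ℕ → A) (n : ℕ) :
    cone (List.ofFn fun i : Fin n => x i) = PiNat.cylinder x n := by
  ext y
  rw [PiNat.mem_cylinder_iff]
  constructor
  · rintro ⟨z, rfl⟩ i hi
    simp [wordAppend, hi]
  · intro h
    refine ⟨fun k => y (k + n), funext fun k => ?_⟩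
    by_cases hk : k < n
    · simp [wordAppend, hk, h k hk]
    · simp [wordAppend, hk, Nat.sub_add_cancel (not_lt.1 hk)]

/-- The family of cones `C_{α i}` is a partition of the space of sequences, stated as: every
sequence lies in exactly one of them. -/
def IsConePartition {ι : Type*} (α : ι → List A) : Prop :=
  ∀ x, ∃! i, x ∈ cone (α i)

namespace IsConePartition

variable {ι : Type*} {α : ι → List A}

theorem iUnion_cone (hα : IsConePartition α) : ⋃ i, cone (α i) = Set.univ :=
  Set.eq_univ_of_forall fun x => Set.mem_iUnion.2 (hα x).exists

theorem pairwise_disjoint (hα : IsConePartition α) :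
    Pairwise (onFun Disjoint (cone ∘ α)) := fun _ _ hij =>
  Set.disjoint_left.2 fun x hi hj => hij ((hα x).unique hi hj)

theorem bijective_wordAppend (hα : IsConePartition α) :
    Bijective fun p : ι × (ℕ → A) => wordAppend (α p.1) p.2 := by
  constructor
  · rintro ⟨i, x⟩ ⟨j, y⟩ h
    obtain rfl : i = j := (hα (wordAppend (α i) x)).unique ⟨x, rfl⟩ ⟨y, h.symm⟩
    exact congrArg (Prod.mk i) (wordAppend_injective _ h)
  · intro x
    obtain ⟨i, y, rfl⟩ := (hα x).exists
    exact ⟨(i, y), rfl⟩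

end IsConePartition

variable [TopologicalSpace A]

theorem continuous_wordAppend (α : List A) : Continuous (wordAppend α) := by
  refine continuous_pi fun n => ?_
  by_cases h : n < α.length
  · simpa [wordAppend, h] using continuous_const
  · simpa [wordAppend, h] using continuous_apply _

theorem exists_mem_cone_subset [DiscreteTopology A] {U : Set (ℕ → A)} (hU : IsOpen U) {x : ℕ → A}
    (hx : x ∈ U) : ∃ α : List A, x ∈ cone α ∧ cone α ⊆ U := by
  obtain ⟨_, ⟨y, n, rfl⟩, hxy, hyU⟩ :=
    (PiNat.isTopologicalBasis_cylinders fun _ : ℕ => A).exists_subset_of_mem_open hx hU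
  exact ⟨List.ofFn fun i : Fin n => y i, by rwa [cone_ofFn], by rwa [cone_ofFn]⟩

theorem exists_inThompsonV [CompactSpace A] [T2Space A] {k : ℕ} {α β : Fin k → List A}
    (hα : IsConePartition α) (hβ : IsConePartition β) :
    ∃ f : (ℕ → A) ≃ₜ (ℕ → A), InThompsonV f ∧
      ∀ i x, f (wordAppend (α i) x) = wordAppend (β i) x := by
  obtain ⟨f, hf⟩ := exists_homeomorph_of_bijective
    (fun i => continuous_wordAppend (α i)) hα.bijective_wordAppend
    (fun i => continuous_wordAppend (β i)) hβ.bijective_wordAppend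
  exact ⟨f, ⟨k, α, β, hα.iUnion_cone, hα.pairwise_disjoint, hβ.iUnion_cone, hβ.pairwise_disjoint,
    hf⟩, hf⟩

theorem inThompsonV_refl : InThompsonV (Homeomorph.refl (ℕ → A)) := by
  have hnil : IsConePartition fun _ : Fin 1 => ([] : List A) := fun x =>
    ⟨0, by simp, fun i _ => Subsingleton.elim i 0⟩
  exact ⟨1, _, _, hnil.iUnion_cone, hnil.pairwise_disjoint, hnil.iUnion_cone,
    hnil.pairwise_disjoint, fun _ _ => rfl⟩

theorem isConePartition_bit_split (i j : Bool) : IsConePartition ![[i, j], [i, !j], [!i]] := by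
  intro x
  simp only [ExistsUnique, Fin.exists_fin_succ, Fin.forall_fin_succ]
  cases h0 : x 0 <;> cases h1 : x 1 <;> cases i <;> cases j <;> simp [mem_cone_cons, h0, h1]

theorem isConePartition_split_bit (i j : Bool) : IsConePartition ![[i], [!i, j], [!i, !j]] := by
  intro x
  simp only [ExistsUnique, Fin.exists_fin_succ, Fin.forall_fin_succ]
  cases h0 : x 0 <;> cases h1 : x 1 <;> cases i <;> cases j <;> simp [mem_cone_cons, h0, h1]

theorem exists_inThompsonV_wordAppend_bit (i j : Bool) :
    ∃ f : (ℕ → Bool) ≃ₜ (ℕ → Bool), InThompsonV f ∧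
      ∀ x, f (wordAppend [j] x) = wordAppend [i] (wordAppend [j] x) := by
  obtain ⟨f, hfV, hf⟩ :=
    exists_inThompsonV (isConePartition_split_bit j i) (isConePartition_bit_split i j)
  exact ⟨f, hfV, fun x => (hf 0 x).trans (wordAppend_cons i [j] x)⟩

end Words

/-- The Cantor cube `𝔠^S`. -/
abbrev Cube (S : Type*) : Type _ := S → ℕ → Bool

section Bricks

variable {S : Type*}

open scoped Classical in
/-- The map `𝔠^S → 𝔠^S` prepending the bit `i` to the coordinate `s`. -/
noncomputable def split (s : S) (i : Bool) (x : Cube S) : Cube S :=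
  update x s (wordAppend [i] (x s))

@[simp]
theorem split_apply_self (s : S) (i : Bool) (x : Cube S) :
    split s i x s = wordAppend [i] (x s) := by
  simp [split]

@[simp]
theorem split_apply_of_ne {s t : S} (h : t ≠ s) (i : Bool) (x : Cube S) : split s i x t = x t := by
  simp [split, h]

open scoped Classical in
/-- The two halves `split s i` of the cube, glued to a homeomorphism. -/
noncomputable def splitHomeomorph (s : S) : Bool × Cube S ≃ₜ Cube S :=
  Continuous.homeoOfEquivCompactToT2
    (f := { toFun := fun p => split s p.1 p.2
            invFun := fun x => (x s 0, update x s fun n => x s (n + 1))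
            left_inv := fun p => by simp [split]
            right_inv := fun x => by simp [split, wordAppend_singleton_tail] })
    (continuous_prod_of_discrete_left.2 fun i => continuous_id.update s
      ((continuous_wordAppend [i]).comp (continuous_apply s)))

theorem splitHomeomorph_apply (s : S) (i : Bool) (x : Cube S) :
    splitHomeomorph s (i, x) = split s i x := rfl

theorem exists_split_eq (s : S) (x : Cube S) : ∃ i y, split s i y = x :=
  let ⟨⟨i, y⟩, h⟩ := (splitHomeomorph s).surjective x
  ⟨i, y, h⟩

theorem split_inj {s : S} {i j : Bool} {x y : Cube S} :
    split s i x = split s j y ↔ i = j ∧ x = y := by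
  rw [← splitHomeomorph_apply, ← splitHomeomorph_apply, (splitHomeomorph s).injective.eq_iff,
    Prod.mk.injEq]

theorem split_comm {s t : S} (h : s ≠ t) (i j : Bool) (x : Cube S) :
    split s i (split t j x) = split t j (split s i x) := by
  classical
  simp only [split, update_of_ne h, update_of_ne h.symm, update_comm h]

theorem continuous_split (s : S) (i : Bool) : Continuous (split s i) :=
  (splitHomeomorph s).continuous.comp (Continuous.prodMk_right i)

theorem isOpenMap_split (s : S) (i : Bool) : IsOpenMap (split s i) := fun U hU => by
  have himage : split s i '' U = splitHomeomorph s '' ({i} ×ˢ U) := by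
    simp [Set.singleton_prod, Set.image_image, splitHomeomorph_apply]
  exact himage ▸ (splitHomeomorph s).isOpenMap _ ((isOpen_discrete {i}).prod hU)

theorem split_comp_perm (σ : Equiv.Perm S) (s : S) (i : Bool) (x : Cube S) :
    split s i x ∘ σ = split (σ.symm s) i (x ∘ σ) := by
  classical
  simp only [split, update_comp_equiv, comp_apply, Equiv.apply_symm_apply]

/-- The brick of the word `w`, as an embedding of the cube into itself: each letter `(s, i)`
prescribes a further bit `i` of the coordinate `s`. -/
noncomputable def brick (w : List (S × Bool)) (x : Cube S) : Cube S :=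
  w.foldr (fun p => split p.1 p.2) x

@[simp]
theorem brick_nil (x : Cube S) : brick [] x = x := rfl

@[simp]
theorem brick_cons (p : S × Bool) (w : List (S × Bool)) (x : Cube S) :
    brick (p :: w) x = split p.1 p.2 (brick w x) := rfl

theorem brick_append (w v : List (S × Bool)) (x : Cube S) :
    brick (w ++ v) x = brick w (brick v x) :=
  List.foldr_append

theorem continuous_brick (w : List (S × Bool)) : Continuous (brick w) := by
  induction w with
  | nil => exact continuous_id
  | cons p w ih => exact (continuous_split p.1 p.2).comp ih

theorem isOpenMap_brick (w : List (S × Bool)) : IsOpenMap (brick w) := by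
  induction w with
  | nil => exact IsOpenMap.id
  | cons p w ih => exact (isOpenMap_split p.1 p.2).comp ih

theorem isClopen_range_brick (w : List (S × Bool)) : IsClopen (Set.range (brick w)) :=
  ⟨(isCompact_range (continuous_brick w)).isClosed, (isOpenMap_brick w).isOpen_range⟩

theorem brick_comp_perm (σ : Equiv.Perm S) (w : List (S × Bool)) (x : Cube S) :
    brick w x ∘ σ = brick (w.map (Prod.map σ.symm id)) (x ∘ σ) := by
  induction w with
  | nil => rfl
  | cons p w ih => simp [split_comp_perm, ih]

theorem brick_map_mk [DecidableEq S] (s : S) (α : List Bool) (x : Cube S) :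
    brick (α.map (Prod.mk s)) x = update x s (wordAppend α (x s)) := by
  induction α with
  | nil => simp
  | cons i α ih =>
    funext t
    obtain rfl | h := eq_or_ne t s
    · simp [ih, wordAppend_cons i α]
    · simp [ih, h]

theorem exists_brick_apply_eq_wordAppend (α : S → List Bool) (hα : {s | α s ≠ []}.Finite) :
    ∃ w, ∀ x s, brick w x s = wordAppend (α s) (x s) := by
  classical
  have hfinset (F : Finset S) :
      ∃ w, ∀ x s, brick w x s = if s ∈ F then wordAppend (α s) (x s) else x s := by
    induction F using Finset.induction_on with
    | empty => exact ⟨[], by simp⟩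
    | insert a F ha ih =>
      obtain ⟨w, hw⟩ := ih
      refine ⟨(α a).map (Prod.mk a) ++ w, fun x s => ?_⟩
      rw [brick_append, brick_map_mk]
      by_cases h : s = a
      · subst h
        simp [hw, ha]
      · simp [hw, h]
  obtain ⟨w, hw⟩ := hfinset hα.toFinset
  refine ⟨w, fun x s => (hw x s).trans ?_⟩
  by_cases h : α s = [] <;> simp [h]

theorem exists_mem_range_brick_subset {U : Set (Cube S)} (hU : IsOpen U) {x : Cube S}
    (hx : x ∈ U) : ∃ w, x ∈ Set.range (brick w) ∧ Set.range (brick w) ⊆ U := by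
  classical
  obtain ⟨I, u, hu, hIU⟩ := isOpen_pi_iff.1 hU x hx
  choose! α hxα hαu using fun s hs => exists_mem_cone_subset (hu s hs).1 (hu s hs).2
  obtain ⟨w, hw⟩ := exists_brick_apply_eq_wordAppend (fun s => if s ∈ I then α s else [])
    (I.finite_toSet.subset fun s hs => by by_contra h; simp_all)
  have hwI {s : S} (hs : s ∈ I) (y : Cube S) : brick w y s = wordAppend (α s) (y s) := by
    simp [hw, hs]
  choose! y hy using hxα
  refine ⟨w, ⟨fun s => if s ∈ I then y s else x s, funext fun s => ?_⟩, ?_⟩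
  · by_cases hs : s ∈ I <;> simp [hw, hs, hy]
  · rintro _ ⟨z, rfl⟩
    exact hIU fun s hs => hαu s hs ⟨z s, (hwI hs z).symm⟩

/-- On some brick around `x`, the map `f` replaces that brick by another one and permutes the
coordinates. -/
def ReplacesBrickAt (f : Cube S → Cube S) (x : Cube S) : Prop :=
  ∃ (w v : List (S × Bool)) (σ : Equiv.Perm S),
    x ∈ Set.range (brick w) ∧ ∀ y, f (brick w y) = brick v (y ∘ σ)

theorem ReplacesBrickAt.congr {f g : Cube S → Cube S} {x : Cube S} (hg : ReplacesBrickAt g x)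
    (hfg : f =ᶠ[𝓝 x] g) : ReplacesBrickAt f x := by
  obtain ⟨w, v, σ, ⟨x, rfl⟩, hg⟩ := hg
  obtain ⟨U, hUfg, hU, hxU⟩ := mem_nhds_iff.1 hfg
  obtain ⟨u, ⟨x, rfl⟩, huU⟩ := exists_mem_range_brick_subset
    (hU.preimage (continuous_brick w)) hxU
  refine ⟨w ++ u, v ++ u.map (Prod.map σ.symm id), σ, ⟨x, brick_append w u x⟩, fun y => ?_⟩
  have hfy : f (brick w (brick u y)) = g (brick w (brick u y)) := hUfg (huU ⟨y, rfl⟩)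
  rw [brick_append, hfy, hg, brick_comp_perm, brick_append]

end Bricks

section Grids

variable {S : Type*}

theorem brick_inj {w v : List (S × Bool)} (h : w.map Prod.fst = v.map Prod.fst) {x y : Cube S} :
    brick w x = brick v y ↔ w = v ∧ x = y := by
  induction w generalizing v with
  | nil =>
    obtain rfl : v = [] := by simpa using h.symm
    simp
  | cons p w ih =>
    obtain ⟨q, v, rfl, hq, hv⟩ := List.map_eq_cons_iff.1 h.symm
    rw [brick_cons, brick_cons, hq, split_inj, ih hv.symm, List.cons.injEq, Prod.ext_iff, hq,
      eq_self_iff_true, true_and, and_assoc]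

theorem exists_brick_eq (l : List S) (x : Cube S) : ∃ w y, w.map Prod.fst = l ∧ brick w y = x := by
  induction l generalizing x with
  | nil => exact ⟨[], x, rfl, rfl⟩
  | cons s l ih =>
    obtain ⟨i, y, rfl⟩ := exists_split_eq s x
    obtain ⟨w, z, rfl, rfl⟩ := ih y
    exact ⟨(s, i) :: w, z, rfl, rfl⟩

theorem finite_setOf_map_fst_eq (l : List S) :
    {w : List (S × Bool) | w.map Prod.fst = l}.Finite := by
  refine ((List.finite_length_eq Bool l.length).image l.zip).subset ?_
  rintro w rfl
  exact ⟨w.map Prod.snd, by simp, by simp [List.zip_map']⟩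

theorem exists_brick_eq_of_perm {w : List (S × Bool)} {l : List S} (h : (w.map Prod.fst).Perm l) :
    ∃ v, v.map Prod.fst = l ∧ brick v = brick w := by
  generalize hk : w.map Prod.fst = k at h
  induction h generalizing w with
  | nil => exact ⟨w, hk, rfl⟩
  | cons s _ ih =>
    obtain ⟨p, w, rfl, rfl, hw⟩ := List.map_eq_cons_iff.1 hk
    obtain ⟨v, rfl, hv⟩ := ih hw
    exact ⟨p :: v, rfl, funext fun x => by rw [brick_cons, brick_cons, hv]⟩
  | swap s t l =>
    obtain ⟨p, _, rfl, hp, hw⟩ := List.map_eq_cons_iff.1 hk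
    obtain ⟨q, w, rfl, hq, rfl⟩ := List.map_eq_cons_iff.1 hw
    obtain rfl | hst := eq_or_ne s t
    · exact ⟨p :: q :: w, by simp [hp, hq], rfl⟩
    · refine ⟨q :: p :: w, by simp [hp, hq], funext fun x => ?_⟩
      simp only [brick_cons, hp, hq, split_comm hst]
  | trans _ _ ih ih' =>
    obtain ⟨v, hv, hvw⟩ := ih hk
    obtain ⟨u, hu, huv⟩ := ih' hv
    exact ⟨u, hu, huv.trans hvw⟩

theorem brick_of_map_fst_perm_append {P : (Cube S → Cube S) → Prop}
    (hP : ∀ a u, P a → P (a ∘ brick u)) {A : Set (Cube S)} {l m : List S}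
    (hl : ∀ w, w.map Prod.fst = l → (Set.range (brick w) ∩ A).Nonempty → P (brick w))
    {w : List (S × Bool)} (hw : (w.map Prod.fst).Perm (l ++ m))
    (hwA : (Set.range (brick w) ∩ A).Nonempty) : P (brick w) := by
  obtain ⟨_, hv, hvw⟩ := exists_brick_eq_of_perm hw
  obtain ⟨v, u, rfl, hvl, -⟩ := List.map_eq_append_iff.1 hv
  have hcomp : brick w = brick v ∘ brick u := hvw ▸ funext (brick_append v u)
  have hvA : (Set.range (brick v) ∩ A).Nonempty :=
    hwA.mono (Set.inter_subset_inter_left A (hcomp ▸ Set.range_comp_subset_range _ _))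
  exact hcomp ▸ hP _ u (hl v hvl hvA)

theorem exists_forall_brick {P : (Cube S → Cube S) → Prop} (hP : ∀ a u, P a → P (a ∘ brick u))
    (hex : ∀ x, ∃ w, x ∈ Set.range (brick w) ∧ P (brick w)) :
    ∃ l : List S, ∀ w, w.map Prod.fst = l → P (brick w) := by
  suffices ∃ l : List S, ∀ w, w.map Prod.fst = l →
      (Set.range (brick w) ∩ Set.univ).Nonempty → P (brick w) by
    simpa [Set.range_nonempty] using this
  refine isCompact_univ.induction_on
    (p := fun A => ∃ l : List S, ∀ w, w.map Prod.fst = l → (Set.range (brick w) ∩ A).Nonempty →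
      P (brick w)) ⟨[], by simp⟩ ?mono ?union ?nhds
  case mono =>
    rintro A B hAB ⟨l, hl⟩
    exact ⟨l, fun w hw hwA => hl w hw (hwA.mono (Set.inter_subset_inter_right _ hAB))⟩
  case union =>
    rintro A B ⟨l, hl⟩ ⟨m, hm⟩
    refine ⟨l ++ m, fun w hw hwAB => ?_⟩
    rw [Set.inter_union_distrib_left, Set.union_nonempty] at hwAB
    obtain hwA | hwB := hwAB
    · exact brick_of_map_fst_perm_append hP hl (.of_eq hw) hwA
    · exact brick_of_map_fst_perm_append hP hm (hw ▸ List.perm_append_comm) hwB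
  case nhds =>
    intro x _
    obtain ⟨w, hxw, hPw⟩ := hex x
    refine ⟨Set.range (brick w), mem_nhdsWithin_of_mem_nhds
      ((isClopen_range_brick w).isOpen.mem_nhds hxw), w.map Prod.fst, ?_⟩
    rintro v hv ⟨_, ⟨y, rfl⟩, z, hz⟩
    rwa [← ((brick_inj hv.symm).1 hz).1]

theorem exists_forall_append_perm {ι : Type*} {T : Set ι} (hT : T.Finite) (c : ι → List S) :
    ∃ L : List S, ∀ w ∈ T, ∃ m, (c w ++ m).Perm L := by
  classical
  obtain ⟨M, hM⟩ := (hT.image fun w => (c w : Multiset S)).bddAbove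
  refine ⟨M.toList, fun w hw => ?_⟩
  obtain ⟨m, rfl⟩ := Multiset.le_iff_exists_add.1 (hM (Set.mem_image_of_mem _ hw))
  exact ⟨m.toList, by simp [← Multiset.coe_eq_coe, ← Multiset.coe_add]⟩

end Grids

section LocallyActs

variable {S Γ : Type*} [Group Γ] [MulAction Γ (Cube S)]

variable (Γ) in
/-- Near every point, the self-map `a` of the cube agrees with an element of the group `Γ`. -/
def LocallyActs (a : Cube S → Cube S) : Prop :=
  ∀ x, ∃ q : Γ, a =ᶠ[𝓝 x] (q • ·)

/-- The properties of the action of a twisted Brin–Thompson group on `𝔠^S` that make it simple: `Γ`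
contains every homeomorphism that is locally in `Γ`, it contains for all `s`, `i`, `j` an element
prepending the bit `i` to the coordinate `s` on the half cube `range (split s j)`, and each of its
elements locally replaces bricks and permutes coordinates. -/
class IsFullPrefixAction (S Γ : Type*) [Group Γ] [MulAction Γ (Cube S)] : Prop extends
    FaithfulSMul Γ (Cube S), ContinuousConstSMul Γ (Cube S) where
  exists_smul_eq_homeomorph (f : Cube S ≃ₜ Cube S) :
    LocallyActs Γ f → ∃ q : Γ, ∀ x, q • x = f x
  exists_smul_split_eq_split_split (s : S) (i j : Bool) :
    ∃ q : Γ, ∀ x, q • split s j x = split s i (split s j x)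
  replacesBrickAt_smul (q : Γ) (x : Cube S) : ReplacesBrickAt (q • ·) x

theorem locallyActs_smul (q : Γ) : LocallyActs Γ (q • · : Cube S → Cube S) := fun _ => ⟨q, .rfl⟩

variable [IsFullPrefixAction S Γ]

open IsFullPrefixAction

theorem LocallyActs.continuous {a : Cube S → Cube S} (ha : LocallyActs Γ a) : Continuous a :=
  continuous_iff_continuousAt.2 fun x =>
    let ⟨q, hq⟩ := ha x
    (continuous_const_smul q).continuousAt.congr hq.symm

theorem LocallyActs.comp {a b : Cube S → Cube S} (ha : LocallyActs Γ a) (hb : LocallyActs Γ b) :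
    LocallyActs Γ (a ∘ b) := fun x => by
  obtain ⟨p, hp⟩ := ha (b x)
  obtain ⟨q, hq⟩ := hb x
  refine ⟨p * q, ?_⟩
  filter_upwards [hq, hb.continuous.continuousAt.eventually hp] with y hqy hpy
  rw [comp_apply, hpy, hqy, mul_smul]

theorem locallyActs_split (s : S) (i : Bool) : LocallyActs Γ (split s i) := fun x => by
  obtain ⟨j, y, rfl⟩ := exists_split_eq s x
  obtain ⟨q, hq⟩ := exists_smul_split_eq_split_split (Γ := Γ) s i j
  refine ⟨q, ?_⟩
  filter_upwards [(isOpenMap_split s j).range_mem_nhds y]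
  rintro _ ⟨z, rfl⟩
  exact (hq z).symm

variable {ι : Type*} [Finite ι] {a b : ι → Cube S → Cube S}

theorem exists_smul_eq_of_bijective (ha : ∀ i, LocallyActs Γ (a i))
    (ha' : Bijective fun p : ι × Cube S => a p.1 p.2) (hb : ∀ i, LocallyActs Γ (b i))
    (hb' : Bijective fun p : ι × Cube S => b p.1 p.2) : ∃ q : Γ, ∀ i x, q • a i x = b i x := by
  obtain ⟨f, hf⟩ := exists_homeomorph_of_bijective (fun i => (ha i).continuous) ha'
    (fun i => (hb i).continuous) hb'
  suffices LocallyActs Γ f by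
    obtain ⟨q, hq⟩ := exists_smul_eq_homeomorph f this
    exact ⟨q, fun i x => (hq _).trans (hf i x)⟩
  intro z
  obtain ⟨⟨i, x⟩, rfl : a i x = z⟩ := ha'.surjective z
  obtain ⟨p, hp⟩ := ha i x
  obtain ⟨q, hq⟩ := hb i x
  refine ⟨q * p⁻¹, ?_⟩
  have hp' : Filter.Tendsto (p⁻¹ • ·) (𝓝 (a i x)) (𝓝 x) := by
    simpa [hp.eq_of_nhds] using (continuous_const_smul p⁻¹).tendsto (p • x)
  filter_upwards [hp'.eventually hp, hp'.eventually hq] with y hpy hqy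
  rw [mul_smul, ← hqy, ← hf, hpy, smul_inv_smul]

end LocallyActs

section Elements

variable {S Γ : Type*} [Group Γ] [MulAction Γ (Cube S)] [IsFullPrefixAction S Γ]

theorem eq_of_smul_split (s : S) {p q : Γ} (h : ∀ i x, p • split s i x = q • split s i x) :
    p = q :=
  FaithfulSMul.eq_of_smul_eq_smul fun x => by
    obtain ⟨i, y, rfl⟩ := exists_split_eq s x
    exact h i y

theorem bijective_split (s : S) : Bijective fun p : Bool × Cube S => split s p.1 p.2 :=
  (splitHomeomorph s).bijective

theorem bijective_split_split (s t : S) :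
    Bijective fun p : (Bool × Bool) × Cube S => split s p.1.1 (split t p.1.2 p.2) :=
  (bijective_split s).comp <| (bijective_id.prodMap (bijective_split t)).comp
    (Equiv.prodAssoc Bool Bool (Cube S)).bijective

theorem exists_smul_split_eq_split_smul (s : S) (g : Bool → Γ) :
    ∃ q : Γ, ∀ i x, q • split s i x = split s i (g i • x) :=
  exists_smul_eq_of_bijective (fun i => locallyActs_split s i) (bijective_split s)
    (fun i => (locallyActs_split s i).comp (locallyActs_smul (g i))) <|
    (bijective_split s).comp (Equiv.prodShear (Equiv.refl Bool)
      fun i => MulAction.toPerm (g i)).bijective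

/-- The element of `Γ` acting by `g i` on the half cube `range (split s i)`, for both bits `i`. -/
noncomputable def glue (s : S) : (Bool → Γ) →* Γ where
  toFun g := (exists_smul_split_eq_split_smul s g).choose
  map_one' := eq_of_smul_split s fun i x => by
    rw [(exists_smul_split_eq_split_smul s (1 : Bool → Γ)).choose_spec, Pi.one_apply, one_smul,
      one_smul]
  map_mul' g h := eq_of_smul_split s fun i x => by
    rw [mul_smul, (exists_smul_split_eq_split_smul s (g * h)).choose_spec,
      (exists_smul_split_eq_split_smul s h).choose_spec,
      (exists_smul_split_eq_split_smul s g).choose_spec, Pi.mul_apply, mul_smul]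

@[simp]
theorem glue_smul_split (s : S) (g : Bool → Γ) (i : Bool) (x : Cube S) :
    glue s g • split s i x = split s i (g i • x) :=
  (exists_smul_split_eq_split_smul s g).choose_spec i x

theorem exists_smul_split_split_comm (s t : S) :
    ∃ q : Γ, ∀ i j x, q • split s i (split t j x) = split t j (split s i x) := by
  obtain ⟨q, hq⟩ := exists_smul_eq_of_bijective (Γ := Γ) (ι := Bool × Bool)
    (a := fun p x => split s p.1 (split t p.2 x)) (b := fun p x => split t p.2 (split s p.1 x))
    (fun p => (locallyActs_split s p.1).comp (locallyActs_split t p.2)) (bijective_split_split s t)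
    (fun p => (locallyActs_split t p.2).comp (locallyActs_split s p.1)) <|
    (bijective_split_split t s).comp (Prod.swap_bijective.prodMap bijective_id)
  exact ⟨q, fun i j => hq (i, j)⟩

variable (Γ) in
/-- The element of `Γ` exchanging the first bit of the coordinate `s` with the following first bit
of the coordinate `t`; for `s ≠ t` it is the identity, while for `s = t` it transposes the first two
bits of that coordinate. -/
noncomputable def exchange (s t : S) : Γ :=
  (exists_smul_split_split_comm s t).choose

@[simp]
theorem exchange_smul_split_split (s t : S) (i j : Bool) (x : Cube S) :
    exchange Γ s t • split s i (split t j x) = split t j (split s i x) :=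
  (exists_smul_split_split_comm s t).choose_spec i j x

theorem exchange_of_ne {s t : S} (h : s ≠ t) : exchange Γ s t = 1 :=
  eq_of_smul_split s fun i x => by
    obtain ⟨j, y, rfl⟩ := exists_split_eq t x
    rw [exchange_smul_split_split, split_comm h, one_smul]

theorem exists_forall_smul_split_eq_split (s t : S) :
    ∃ q : Γ, ∀ i x, q • split s i x = split t i x :=
  exists_smul_eq_of_bijective (fun i => locallyActs_split s i) (bijective_split s)
    (fun i => locallyActs_split t i) (bijective_split t)

variable (Γ) in
/-- The element of `Γ` moving the first bit of the coordinate `s` to the coordinate `t`. -/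
noncomputable def transfer (s t : S) : Γ :=
  (exists_forall_smul_split_eq_split s t).choose

@[simp]
theorem transfer_smul_split (s t : S) (i : Bool) (x : Cube S) :
    transfer Γ s t • split s i x = split t i x :=
  (exists_forall_smul_split_eq_split s t).choose_spec i x

end Elements

section Homomorphism

variable {S Γ Λ : Type*} [Group Γ] [MulAction Γ (Cube S)] [IsFullPrefixAction S Γ] [Group Λ]

open IsFullPrefixAction

theorem isConj_exchange_self_glue (s : S) :
    IsConj (exchange Γ s s) (glue s fun _ => exchange Γ s s) := by
  set a := exchange Γ s s
  set b := glue s fun _ => a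
  have braid : a * b * a = b * a * b := eq_of_smul_split s fun i x => by
    obtain ⟨j, x, rfl⟩ := exists_split_eq s x
    obtain ⟨k, x, rfl⟩ := exists_split_eq s x
    simp [mul_smul, a, b]
  exact isConj_iff.2 ⟨a * b, by rw [braid]; group⟩

theorem transfer_eq (s t : S) :
    transfer Γ s t = exchange Γ t t * glue t (fun _ => transfer Γ s t) * exchange Γ s t :=
  eq_of_smul_split s fun i x => by
    obtain ⟨j, x, rfl⟩ := exists_split_eq t x
    simp [mul_smul]

variable {π : Γ →* Λ} (hglue : ∀ (s : S) (g : Bool → Γ), (∀ i, π (g i) = 1) → π (glue s g) = 1)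
variable (hconj : ∀ (s : S) (f : Γ), IsConj (π f) (π (glue s fun _ => f)) → π f = 1)

section

include hconj

theorem map_exchange_eq_one (s t : S) : π (exchange Γ s t) = 1 := by
  obtain rfl | h := eq_or_ne s t
  · exact hconj s _ (π.map_isConj (isConj_exchange_self_glue s))
  · rw [exchange_of_ne h, map_one]

theorem map_transfer_eq_one (s t : S) : π (transfer Γ s t) = 1 := by
  have hmap : π (transfer Γ s t) = π (glue t fun _ => transfer Γ s t) := by
    conv_lhs => rw [transfer_eq]
    rw [map_mul, map_mul, map_exchange_eq_one hconj, map_exchange_eq_one hconj, one_mul, mul_one]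
  exact hconj t _ (by rw [hmap])

end

section

include hglue

theorem exists_smul_brick_eq_brick_smul (l : List S) {g : List (S × Bool) → Γ}
    (hg : ∀ w, π (g w) = 1) :
    ∃ q : Γ, π q = 1 ∧ ∀ w, w.map Prod.fst = l → ∀ x, q • brick w x = brick w (g w • x) := by
  induction l generalizing g with
  | nil => exact ⟨g [], hg [], by simp⟩
  | cons s l ih =>
    choose q hqπ hq using fun i => ih (g := fun w => g ((s, i) :: w)) fun w => hg _
    refine ⟨glue s q, hglue s q hqπ, fun w hw x => ?_⟩
    obtain ⟨⟨_, i⟩, w, rfl, rfl, hwl⟩ := List.map_eq_cons_iff.1 hw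
    rw [brick_cons, brick_cons, glue_smul_split, hq i w hwl]

include hconj

theorem exists_smul_split_brick_eq (s t : S) (l : List S) :
    ∃ k : Γ, π k = 1 ∧ ∀ w, (w.map Prod.fst).Perm l →
      ∀ j x, k • split s j (brick w x) = brick w (split t j x) := by
  suffices ∃ k : Γ, π k = 1 ∧ ∀ w, w.map Prod.fst = l →
      ∀ j x, k • split s j (brick w x) = brick w (split t j x) by
    obtain ⟨k, hkπ, hk⟩ := this
    refine ⟨k, hkπ, fun w hw => ?_⟩
    obtain ⟨v, hvl, hvw⟩ := exists_brick_eq_of_perm hw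
    exact hvw ▸ hk v hvl
  induction l with
  | nil => exact ⟨transfer Γ s t, map_transfer_eq_one hconj s t, by simp⟩
  | cons r l ih =>
    obtain ⟨k, hkπ, hk⟩ := ih
    refine ⟨glue r (fun _ => k) * exchange Γ s r, ?_, fun w hw j x => ?_⟩
    · rw [map_mul, hglue r _ fun _ => hkπ, map_exchange_eq_one hconj, one_mul]
    · obtain ⟨⟨_, i⟩, w, rfl, rfl, hwl⟩ := List.map_eq_cons_iff.1 hw
      simp [mul_smul, hk w hwl]

end

theorem exists_forall_smul_brick_eq_brick_comp_perm (f : Γ) :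
    ∃ (l : List S) (v : List (S × Bool) → List (S × Bool)) (σ : List (S × Bool) → Equiv.Perm S),
      ∀ w, w.map Prod.fst = l → ∀ y, f • brick w y = brick (v w) (y ∘ σ w) := by
  let P (a : Cube S → Cube S) : Prop :=
    ∃ (v : List (S × Bool)) (σ : Equiv.Perm S), ∀ y, f • a y = brick v (y ∘ σ)
  have hP (a : Cube S → Cube S) (u : List (S × Bool)) : P a → P (a ∘ brick u) :=
    fun ⟨v, σ, h⟩ => ⟨v ++ u.map (Prod.map σ.symm id), σ, fun y => by
      rw [comp_apply, h, brick_comp_perm, brick_append]⟩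
  have hex (x : Cube S) : ∃ w, x ∈ Set.range (brick w) ∧ P (brick w) :=
    let ⟨w, v, σ, hx, h⟩ := replacesBrickAt_smul f x
    ⟨w, hx, v, σ, h⟩
  obtain ⟨l, hl⟩ := exists_forall_brick hP hex
  choose! v σ h using hl
  exact ⟨l, v, σ, h⟩

include hglue hconj

theorem map_eq_map_glue (s : S) (f : Γ) : π f = π (glue s fun _ => f) := by
  obtain ⟨l, v, σ, hf⟩ := exists_forall_smul_brick_eq_brick_comp_perm (S := S) f
  obtain ⟨L, hL⟩ := exists_forall_append_perm (finite_setOf_map_fst_eq l)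
    fun w => (v w).map Prod.fst
  choose! m hm using hL
  obtain ⟨k, hkπ, hk⟩ := exists_smul_split_brick_eq hglue hconj s s l
  obtain ⟨k', hk'π, hk'⟩ := exists_smul_split_brick_eq hglue hconj s s L
  choose g hgπ hg using fun w =>
    exists_smul_split_brick_eq hglue hconj s (σ w s) ((m w).map (σ w))
  obtain ⟨q, hqπ, hq⟩ := exists_smul_brick_eq_brick_smul hglue l hgπ
  have hcomm : f * q * k = k' * glue s fun _ => f := eq_of_smul_split s fun j x => by
    obtain ⟨w, x, hw, rfl⟩ := exists_brick_eq l x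
    obtain ⟨u, x, hu, rfl⟩ := exists_brick_eq ((m w).map (σ w)) x
    have hvu : ((v w ++ u.map (Prod.map (σ w).symm id)).map Prod.fst).Perm L := by
      refine .trans (.of_eq ?_) (hm w hw)
      simpa [comp_def] using congrArg (List.map (σ w).symm) hu
    calc (f * q * k) • split s j (brick w (brick u x))
        = f • q • brick w (split s j (brick u x)) := by
          rw [mul_smul, mul_smul, hk w (.of_eq hw)]
      _ = f • brick w (brick u (split (σ w s) j x)) := by rw [hq w hw, hg w u (.of_eq hu)]
      _ = brick (v w ++ u.map (Prod.map (σ w).symm id)) (split s j (x ∘ σ w)) := by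
          rw [hf w hw, brick_comp_perm, split_comp_perm, Equiv.symm_apply_apply, brick_append]
      _ = k' • split s j (brick (v w ++ u.map (Prod.map (σ w).symm id)) (x ∘ σ w)) :=
          (hk' _ hvu _ _).symm
      _ = (k' * glue s fun _ => f) • split s j (brick w (brick u x)) := by
          rw [mul_smul, glue_smul_split, hf w hw, brick_comp_perm, brick_append]
  simpa [hkπ, hk'π, hqπ] using congrArg π hcomm

theorem map_eq_one_of_glue [Nonempty S] (f : Γ) : π f = 1 :=
  let s : S := Classical.arbitrary S
  hconj s f (by rw [map_eq_map_glue hglue hconj s f])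

end Homomorphism

section BrickHom

variable {S Γ : Type*} [Group Γ] [MulAction Γ (Cube S)] [IsFullPrefixAction S Γ]

open IsFullPrefixAction

/-- The embedding of `Γ` onto a group of elements supported in a brick: `brickHom w g` is the
conjugate of `g` by `brick w` on `range (brick w)`, and the identity outside. -/
noncomputable def brickHom : List (S × Bool) → Γ →* Γ
  | [] => MonoidHom.id Γ
  | p :: w => ((glue p.1).comp (MonoidHom.mulSingle (fun _ => Γ) p.2)).comp (brickHom w)

theorem brickHom_cons (p : S × Bool) (w : List (S × Bool)) (g : Γ) :
    brickHom (p :: w) g = glue p.1 (Pi.mulSingle p.2 (brickHom w g)) := rfl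

@[simp]
theorem brickHom_smul_brick (w : List (S × Bool)) (g : Γ) (x : Cube S) :
    brickHom w g • brick w x = brick w (g • x) := by
  induction w with
  | nil => rfl
  | cons p w ih => rw [brickHom_cons, brick_cons, glue_smul_split, Pi.mulSingle_eq_same, ih,
      brick_cons]

theorem brickHom_smul_of_notMem {w : List (S × Bool)} {x : Cube S} (hx : x ∉ Set.range (brick w))
    (g : Γ) : brickHom w g • x = x := by
  induction w generalizing x with
  | nil => exact absurd ⟨x, rfl⟩ hx
  | cons p w ih =>
    obtain ⟨s, i⟩ := p
    obtain ⟨j, x, rfl⟩ := exists_split_eq s x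
    rw [brickHom_cons, glue_smul_split]
    obtain rfl | hij := eq_or_ne j i
    · rw [Pi.mulSingle_eq_same, ih fun ⟨y, hy⟩ => hx ⟨y, congrArg (split s j) hy⟩]
    · rw [Pi.mulSingle_eq_of_ne hij, one_smul]

theorem brickHom_brickHom (w v : List (S × Bool)) (g : Γ) :
    brickHom w (brickHom v g) = brickHom (w ++ v) g := by
  induction w with
  | nil => rfl
  | cons p w ih => rw [brickHom_cons, ih, List.cons_append, brickHom_cons]

theorem glue_eq_brickHom_mul_brickHom (s : S) (g : Bool → Γ) :
    glue s g = brickHom [(s, false)] (g false) * brickHom [(s, true)] (g true) := by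
  have hg : g = Pi.mulSingle false (g false) * Pi.mulSingle true (g true) := by
    funext i
    cases i <;> simp
  conv_lhs => rw [hg, map_mul]
  rfl

theorem mul_brickHom_mul_inv {q : Γ} {w v : List (S × Bool)}
    (hq : ∀ x, q • brick w x = brick v x) (g : Γ) : q * brickHom w g * q⁻¹ = brickHom v g := by
  refine mul_inv_eq_of_eq_mul (FaithfulSMul.eq_of_smul_eq_smul fun x : Cube S => ?_)
  rw [mul_smul, mul_smul]
  by_cases hx : x ∈ Set.range (brick w)
  · obtain ⟨x, rfl⟩ := hx
    rw [brickHom_smul_brick, hq, hq, brickHom_smul_brick]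
  · have hqx : q • x ∉ Set.range (brick v) := by
      rintro ⟨y, hy⟩
      exact hx ⟨y, smul_left_cancel q (by rw [hq, hy])⟩
    rw [brickHom_smul_of_notMem hx, brickHom_smul_of_notMem hqx]

theorem exists_smul_split_eq_split (s t : S) (i j : Bool) :
    ∃ q : Γ, ∀ x, q • split s i x = split t j x := by
  obtain ⟨p, hp⟩ := exists_smul_split_eq_split_split (Γ := Γ) s j i
  obtain ⟨q, hq⟩ := exists_smul_split_eq_split_split (Γ := Γ) s i j
  exact ⟨transfer Γ s t * q⁻¹ * exchange Γ s s * p, fun x => by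
    rw [mul_smul, mul_smul, mul_smul, hp, exchange_smul_split_split, ← hq, inv_smul_smul,
      transfer_smul_split]⟩

theorem exists_smul_brick_cons_eq_split (p : S × Bool) (w : List (S × Bool)) (s : S) (i : Bool) :
    ∃ q : Γ, ∀ x, q • brick (p :: w) x = split s i x := by
  induction w generalizing p s i with
  | nil => exact exists_smul_split_eq_split p.1 s p.2 i
  | cons r w ih =>
    obtain ⟨h, hh⟩ := ih r p.1 p.2
    obtain ⟨d, hd⟩ := exists_smul_split_eq_split_split (Γ := Γ) p.1 p.2 p.2
    obtain ⟨e, he⟩ := exists_smul_split_eq_split (Γ := Γ) p.1 s p.2 i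
    exact ⟨e * d⁻¹ * glue p.1 fun _ => h, fun x => by
      rw [mul_smul, mul_smul, brick_cons, glue_smul_split, hh, ← hd, inv_smul_smul, he]⟩

theorem isConj_brickHom {w v : List (S × Bool)} (hw : w ≠ []) (hv : v ≠ []) (g : Γ) :
    IsConj (brickHom w g) (brickHom v g) := by
  obtain ⟨p, w, rfl⟩ := List.exists_cons_of_ne_nil hw
  obtain ⟨r, v, rfl⟩ := List.exists_cons_of_ne_nil hv
  obtain ⟨q, hq⟩ := exists_smul_brick_cons_eq_split (Γ := Γ) p w p.1 p.2
  obtain ⟨q', hq'⟩ := exists_smul_brick_cons_eq_split (Γ := Γ) r v p.1 p.2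
  exact isConj_iff.2 ⟨q'⁻¹ * q, mul_brickHom_mul_inv
    (fun x => by rw [mul_smul, hq, ← hq', inv_smul_smul]) g⟩

end BrickHom

section Displacement

variable {S Γ : Type*} [Group Γ] [MulAction Γ (Cube S)] [IsFullPrefixAction S Γ]

theorem exists_disjoint_smul_brick {n : Γ} (hn : n ≠ 1) :
    ∃ w : List (S × Bool), w ≠ [] ∧ ∀ x, n • brick w x ∉ Set.range (brick w) := by
  obtain ⟨x, hx⟩ : ∃ x : Cube S, n • x ≠ x := by
    by_contra! h
    exact hn (FaithfulSMul.eq_of_smul_eq_smul fun x : Cube S => by rw [h, one_smul])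
  obtain ⟨U, V, hU, hV, hnxU, hxV, hUV⟩ := t2_separation hx
  obtain ⟨w, hxw, hw⟩ := exists_mem_range_brick_subset
    ((hU.preimage (continuous_const_smul n)).inter hV) ⟨hnxU, hxV⟩
  have hdisj (y : Cube S) : n • brick w y ∉ Set.range (brick w) := fun h =>
    hUV.notMem_of_mem_left (hw ⟨y, rfl⟩).1 (hw h).2
  refine ⟨w, ?_, hdisj⟩
  rintro rfl
  exact hdisj x ⟨n • x, rfl⟩

theorem commute_conj_brickHom {n : Γ} {w : List (S × Bool)}
    (hw : ∀ x, n • brick w x ∉ Set.range (brick w)) (f g : Γ) :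
    Commute (n * brickHom w f * n⁻¹) (brickHom w g) := by
  refine .of_map (f := MulAction.toPermHom Γ (Cube S)) MulAction.toPerm_injective
    (Equiv.Perm.Disjoint.commute fun x => ?_)
  by_cases hx : x ∈ Set.range (brick w)
  · obtain ⟨y, rfl⟩ := hx
    have hy : n⁻¹ • brick w y ∉ Set.range (brick w) := fun ⟨z, hz⟩ =>
      hw z ⟨y, by rw [hz, smul_inv_smul]⟩
    left
    rw [MulAction.toPermHom_apply, MulAction.toPerm_apply, mul_smul, mul_smul,
      brickHom_smul_of_notMem hy, smul_inv_smul]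
  · exact .inr (brickHom_smul_of_notMem hx g)

end Displacement

theorem map_eq_one_of_isPerfect {G H : Type*} [Group G] [Group H] [Group.IsPerfect G] {ρ : G →* H}
    (hρ : ∀ f g, Commute (ρ f) (ρ g)) (g : G) : ρ g = 1 := by
  have hker : commutator G ≤ ρ.ker := Subgroup.commutator_le.2 fun f _ g _ => by
    rw [MonoidHom.mem_ker, map_commutatorElement, (hρ f g).commutator_eq]
  exact hker Group.IsPerfect.mem_commutator

section Simplicity

variable (S Γ : Type*) [Nonempty S] [Group Γ] [MulAction Γ (Cube S)] [IsFullPrefixAction S Γ]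

include S

theorem nontrivial_of_isFullPrefixAction : Nontrivial Γ := by
  let s : S := Classical.arbitrary S
  obtain ⟨q, hq⟩ := IsFullPrefixAction.exists_smul_split_eq_split_split (Γ := Γ) s false true
  refine ⟨q, 1, ?_⟩
  rintro rfl
  have hsplit := hq fun _ _ => false
  rw [one_smul, split_inj] at hsplit
  exact Bool.false_ne_true hsplit.1.symm

theorem isPerfect_of_isFullPrefixAction : Group.IsPerfect Γ := by
  let u : List (S × Bool) := [(Classical.arbitrary S, false)]
  have hu : u ≠ [] := List.cons_ne_nil _ _
  let φ : Γ →* Abelianization Γ := Abelianization.of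
  let ψ : Γ →* Abelianization Γ := φ.comp (brickHom u)
  have hφψ {w : List (S × Bool)} (hw : w ≠ []) (g : Γ) : φ (brickHom w g) = ψ g :=
    isConj_iff_eq.1 (φ.map_isConj (isConj_brickHom hw hu g))
  have hφglue (s : S) (g : Bool → Γ) : φ (glue s g) = ψ (g false) * ψ (g true) := by
    rw [glue_eq_brickHom_mul_brickHom, map_mul, hφψ (by simp), hφψ (by simp)]
  have hψbrick {w : List (S × Bool)} (g : Γ) : ψ (brickHom w g) = ψ g := by
    rw [MonoidHom.comp_apply, brickHom_brickHom, hφψ (by simp [hu])]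
  have hψglue (s : S) (g : Bool → Γ) : ψ (glue s g) = ψ (g false) * ψ (g true) := by
    rw [glue_eq_brickHom_mul_brickHom, map_mul, hψbrick, hψbrick]
  have hψ (g : Γ) : ψ g = Abelianization.lift ψ (φ g) := (Abelianization.lift_apply_of ψ g).symm
  have hφ (f : Γ) : φ f = 1 := by
    refine map_eq_one_of_glue (S := S) (fun s g hg => ?_) (fun s f hf => ?_) f
    · simp [hφglue, hψ, hg]
    · rw [isConj_iff_eq] at hf
      have hψf : ψ f = 1 := by
        have hsq : ψ f = ψ f * ψ f := by rw [← hψglue s fun _ => f, hψ, hf, ← hψ]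
        exact left_eq_mul.1 hsq
      rw [hf, hφglue, hψf, one_mul]
  rw [Group.isPerfect_def, ← Abelianization.ker_of, MonoidHom.ker_eq_top_iff]
  exact MonoidHom.ext hφ

variable {Γ} in
theorem map_eq_one_of_map_eq_one {Λ : Type*} [Group Λ] {π : Γ →* Λ} {n : Γ} (hn : n ≠ 1)
    (hπn : π n = 1) (f : Γ) : π f = 1 := by
  have : Group.IsPerfect Γ := isPerfect_of_isFullPrefixAction S Γ
  obtain ⟨w, hw, hnw⟩ := exists_disjoint_smul_brick (S := S) hn
  -- Conjugation by `n` moves `brickHom w f` off the support of `brickHom w g`, yet `π` ignores it.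
  have hcomm (f g : Γ) : Commute (π (brickHom w f)) (π (brickHom w g)) := by
    simpa [hπn] using (commute_conj_brickHom hnw f g).map π
  have hbrick (g : Γ) : π (brickHom w g) = 1 :=
    map_eq_one_of_isPerfect (ρ := π.comp (brickHom w)) hcomm g
  have hbrick' {v : List (S × Bool)} (hv : v ≠ []) (g : Γ) : π (brickHom v g) = 1 :=
    isConj_one_right.1 (hbrick g ▸ π.map_isConj (isConj_brickHom hw hv g))
  have hglue (s : S) (g : Bool → Γ) : π (glue s g) = 1 := by
    rw [glue_eq_brickHom_mul_brickHom, map_mul, hbrick' (by simp), hbrick' (by simp), one_mul]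
  exact map_eq_one_of_glue (fun s g _ => hglue s g)
    (fun s f hf => isConj_one_left.1 (hglue s (fun _ => f) ▸ hf)) f

theorem isSimpleGroup_of_isFullPrefixAction : IsSimpleGroup Γ where
  toNontrivial := nontrivial_of_isFullPrefixAction S Γ
  eq_bot_or_eq_top_of_normal N _ := by
    refine N.bot_or_exists_ne_one.imp_right ?_
    rintro ⟨n, hnN, hn⟩
    refine (Subgroup.eq_top_iff' N).2 fun f => (QuotientGroup.eq_one_iff f).1 ?_
    exact map_eq_one_of_map_eq_one S (π := QuotientGroup.mk' N) hn
      ((QuotientGroup.eq_one_iff n).2 hnN) f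

end Simplicity

section Piecewise

/-- The action of the homeomorphism group by evaluation, over the group structure `homeoGroup`. -/
instance homeomorphMulAction {X : Type*} [TopologicalSpace X] : MulAction (X ≃ₜ X) X where
  smul f x := f x
  one_smul _ := rfl
  mul_smul _ _ _ := rfl

theorem exists_eventuallyEq_of_isPiecewise {X : Type*} [TopologicalSpace X] {W : Set (X ≃ₜ X)}
    {f : X ≃ₜ X} (hf : IsPiecewise W f) (x : X) : ∃ g ∈ W, f =ᶠ[𝓝 x] g := by
  obtain ⟨k, P, hclopen, hcover, -, hP⟩ := hf
  obtain ⟨i, hi⟩ := Set.mem_iUnion.1 (hcover ▸ Set.mem_univ x)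
  obtain ⟨g, hgW, hg⟩ := hP i
  exact ⟨g, hgW, Filter.eventually_of_mem ((hclopen i).isOpen.mem_nhds hi) hg⟩

variable {S : Type*}

theorem isPiecewise_of_forall_exists_eventuallyEq {W : Set (Cube S ≃ₜ Cube S)}
    {f : Cube S ≃ₜ Cube S} (hf : ∀ x, ∃ g ∈ W, f =ᶠ[𝓝 x] g) : IsPiecewise W f := by
  obtain ⟨l, hl⟩ := exists_forall_brick (P := fun a => ∃ g ∈ W, ∀ y, f (a y) = g (a y))
    (fun a u ⟨g, hgW, hg⟩ => ⟨g, hgW, fun y => hg _⟩) fun x => by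
      obtain ⟨g, hgW, hg⟩ := hf x
      obtain ⟨U, hUg, hU, hxU⟩ := mem_nhds_iff.1 hg
      obtain ⟨w, hxw, hwU⟩ := exists_mem_range_brick_subset hU hxU
      exact ⟨w, hxw, g, hgW, fun y => hUg (hwU ⟨y, rfl⟩)⟩
  have : Finite {w : List (S × Bool) // w.map Prod.fst = l} := finite_setOf_map_fst_eq l
  obtain ⟨k, ⟨e⟩⟩ := Finite.exists_equiv_fin {w : List (S × Bool) // w.map Prod.fst = l}
  refine ⟨k, fun i => Set.range (brick (e.symm i).1), fun i => isClopen_range_brick _,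
    Set.eq_univ_of_forall fun x => ?_, fun i j hij => Set.disjoint_left.2 ?_, fun i => ?_⟩
  · obtain ⟨w, y, hw, rfl⟩ := exists_brick_eq l x
    exact Set.mem_iUnion.2 ⟨e ⟨w, hw⟩, y, by rw [e.symm_apply_apply]⟩
  · rintro _ ⟨y, rfl⟩ ⟨z, hz⟩
    have heq := (brick_inj ((e.symm j).2.trans (e.symm i).2.symm)).1 hz
    exact hij (e.symm.injective (Subtype.ext heq.1.symm))
  · obtain ⟨g, hgW, hg⟩ := hl _ (e.symm i).2
    exact ⟨g, hgW, Set.forall_mem_range.2 hg⟩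

end Piecewise

section Wreath

variable {S : Type*} {G : Subgroup (Equiv.Perm S)}

theorem exists_mem_wreathSet_apply_split_eq (s : S) (i j : Bool) :
    ∃ g ∈ WreathSet S G, ∀ x, g (split s j x) = split s i (split s j x) := by
  classical
  obtain ⟨f, hfV, hf⟩ := exists_inThompsonV_wordAppend_bit i j
  let v : S → ((ℕ → Bool) ≃ₜ (ℕ → Bool)) := update (fun _ => Homeomorph.refl _) s f
  have hv (t : S) : InThompsonV (v t) := by
    obtain rfl | h := eq_or_ne t s
    · simpa [v] using hfV
    · simpa [v, h] using inThompsonV_refl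
  have hfin : {t | v t ≠ Homeomorph.refl _}.Finite :=
    (Set.finite_singleton s).subset fun t ht => by
      by_contra h
      exact ht (update_of_ne h _ _)
  refine ⟨Homeomorph.piCongrRight v, ⟨1, G.one_mem, v, hv, hfin, fun x t => rfl⟩, fun x => ?_⟩
  funext t
  obtain rfl | h := eq_or_ne t s
  · simp [v, hf]
  · simp [v, h]

theorem exists_mem_cone_of_inThompsonV {A : Type*} [TopologicalSpace A] {f : (ℕ → A) ≃ₜ (ℕ → A)}
    (hf : InThompsonV f) (x : ℕ → A) :
    ∃ α β, x ∈ cone α ∧ ∀ y, f (wordAppend α y) = wordAppend β y := by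
  obtain ⟨k, α, β, hα, -, -, -, hf⟩ := hf
  obtain ⟨i, hi⟩ := Set.mem_iUnion.1 (hα ▸ Set.mem_univ x)
  exact ⟨α i, β i, hi, hf i⟩

theorem replacesBrickAt_of_mem_wreathSet {g : Cube S ≃ₜ Cube S} (hg : g ∈ WreathSet S G)
    (x : Cube S) : ReplacesBrickAt g x := by
  obtain ⟨σ, -, v, hv, hfin, hg⟩ := hg
  have hcone (t : S) : ∃ α β, (v t = Homeomorph.refl _ → α = [] ∧ β = []) ∧
      x (σ⁻¹ t) ∈ cone α ∧ ∀ y, v t (wordAppend α y) = wordAppend β y := by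
    by_cases h : v t = Homeomorph.refl _
    · exact ⟨[], [], by simp [h]⟩
    · obtain ⟨α, β, hα⟩ := exists_mem_cone_of_inThompsonV (hv t) (x (σ⁻¹ t))
      exact ⟨α, β, (absurd · h), hα⟩
  choose α β hnil hα hαβ using hcone
  choose z hz using hα
  have hαfin : {t | α t ≠ []}.Finite := hfin.subset fun t ht h => ht (hnil t h).1
  have hβfin : {t | β t ≠ []}.Finite := hfin.subset fun t ht h => ht (hnil t h).2
  obtain ⟨w, hw⟩ := exists_brick_apply_eq_wordAppend (α ∘ σ) (hαfin.preimage σ.injective.injOn)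
  obtain ⟨u, hu⟩ := exists_brick_apply_eq_wordAppend β hβfin
  refine ⟨w, u, σ⁻¹, ⟨z ∘ σ, funext fun s => ?_⟩, fun y => funext fun t => ?_⟩
  · simp [hw, hz]
  · simp [hg, hw, hu, hαβ]

theorem isFullPrefixAction_of_forall_mem_iff {Q : Subgroup (Cube S ≃ₜ Cube S)}
    (hQ : ∀ f, f ∈ Q ↔ IsPiecewise (WreathSet S G) f) : IsFullPrefixAction S Q where
  eq_of_smul_eq_smul h := Subtype.ext (Homeomorph.ext h)
  continuous_const_smul q := q.1.continuous
  exists_smul_eq_homeomorph f hf := by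
    refine ⟨⟨f, (hQ f).2 (isPiecewise_of_forall_exists_eventuallyEq fun x => ?_)⟩, fun x => rfl⟩
    obtain ⟨q, hq⟩ := hf x
    obtain ⟨g, hgW, hg⟩ := exists_eventuallyEq_of_isPiecewise ((hQ q).1 q.2) x
    exact ⟨g, hgW, hq.trans hg⟩
  exists_smul_split_eq_split_split s i j := by
    obtain ⟨g, hgW, hg⟩ := exists_mem_wreathSet_apply_split_eq (G := G) s i j
    exact ⟨⟨g, (hQ g).2 (isPiecewise_of_forall_exists_eventuallyEq fun _ => ⟨g, hgW, .rfl⟩)⟩, hg⟩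
  replacesBrickAt_smul q x := by
    obtain ⟨g, hgW, hg⟩ := exists_eventuallyEq_of_isPiecewise ((hQ q).1 q.2) x
    exact (replacesBrickAt_of_mem_wreathSet hgW x).congr hg

end Wreath

end TwistedBrinThompson

open TwistedBrinThompson in
theorem twisted_brin_thompson_is_simple_general (S : Type*) [Nonempty S]
    (G : Subgroup (Equiv.Perm S))
    (Q : Subgroup ((S → ℕ → Bool) ≃ₜ (S → ℕ → Bool)))
    (hQ : ∀ f, f ∈ Q ↔ IsPiecewise (WreathSet S G) f) :
    IsSimpleGroup ↥Q :=
  have := isFullPrefixAction_of_forall_mem_iff hQ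
  isSimpleGroup_of_isFullPrefixAction S Q

/-!
Belk–Zaremsky (2022): for every nonempty countable set `S` and every group `G` of
permutations of `S`, the twisted Brin–Thompson group `SV_G` — the group of all
piecewise-`W` homeomorphisms of `𝔠^S`, where `W = (⊕_S V) ⋊ G` — is simple.
(Here the group `SV_G` is given as the subgroup of the homeomorphism group of
`𝔠^S` whose members are exactly the piecewise-`W` homeomorphisms.)
-/
theorem twisted_brin_thompson_is_simple (S : Type) [Countable S] [Nonempty S]
    (G : Subgroup (Equiv.Perm S))
    (Q : Subgroup ((S → ℕ → Bool) ≃ₜ (S → ℕ → Bool)))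
    (hQ : ∀ f, f ∈ Q ↔ IsPiecewise (WreathSet S G) f) :
    IsSimpleGroup ↥Q :=
  twisted_brin_thompson_is_simple_general S G Q hQ
end

section
/- Any full group of homeomorphisms of a Cantor space acts oligomorphically on any one of its orbits: if X is a nonempty compact metrizable totally disconnected topological space without isolated points, H is a full group of homeomorphisms of X, x ∈ X, and O = {h(x) : h ∈ H} is the orbit of x, then for every k ≥ 1 the diagonal action of H on O^k has finitely many orbits. -/
/-!
Fix a finite set `F` and points `p`, `h p` outside `F` with `h ∈ H` and `h p ≠ p`. A small clopen
neighbourhood `U` of `p` is disjoint from `h '' U`, and both avoid `F`. The involution that is `h`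
on `U`, `h⁻¹` on `h '' U` and the identity elsewhere is piecewise-`H`, so it lies in `H`; it moves
`p` to `h p` and fixes `F`. Composing such swaps, one coordinate at a time, moves any tuple in the
orbit to any other tuple with the same equalities between coordinates, and there are only finitely
many patterns of equalities.
-/

open MulAction Set

section OrbitwiseHighlyTransitive

/-- The property that the pointwise stabilizer of any finite set `F` is transitive on `O \ F` for
every `G`-orbit `O`. It is high transitivity of `G` on each of its orbits, with the finite set
allowed to contain points of other orbits. -/
def IsOrbitwiseHighlyTransitive (G α : Type*) [Group G] [MulAction G α] : Prop :=
  ∀ ⦃F : Set α⦄, F.Finite → ∀ ⦃p q : α⦄, q ∈ orbit G p → p ∉ F → q ∉ F →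
    q ∈ orbit (fixingSubgroup G F) p

namespace IsOrbitwiseHighlyTransitive

variable {G α ι : Type*} [Group G] [MulAction G α]

theorem exists_smul_eq_on_finset (hG : IsOrbitwiseHighlyTransitive G α) {s t : ι → α}
    (horbit : ∀ i, t i ∈ orbit G (s i)) (hker : ∀ i j, s i = s j ↔ t i = t j) (I : Finset ι) :
    ∃ g : G, ∀ i ∈ I, g • s i = t i := by
  classical
  induction I using Finset.induction_on with
  | empty => exact ⟨1, by simp⟩
  | insert a I _ ih =>
    obtain ⟨g, hg⟩ := ih
    by_cases hta : t a ∈ t '' (I : Set ι)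
    · obtain ⟨i, hi, hia⟩ := hta
      refine ⟨g, Finset.forall_mem_insert _ _ _ |>.2 ⟨?_, hg⟩⟩
      rw [← hia, ← (hker i a).2 hia, hg i hi]
    · have hsa : g • s a ∉ t '' (I : Set ι) := by
        rintro ⟨i, hi, hia⟩
        have hs : s i = s a := smul_left_cancel g ((hg i hi).trans hia)
        exact hta ⟨i, hi, (hker i a).1 hs⟩
      have hmem : t a ∈ orbit G (g • s a) := by
        rw [orbit_smul]
        exact horbit a
      obtain ⟨⟨k, hk⟩, hka : k • g • s a = t a⟩ :=
        hG (I.finite_toSet.image t) hmem hsa hta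
      rw [mem_fixingSubgroup_iff] at hk
      refine ⟨k * g, Finset.forall_mem_insert _ _ _ |>.2 ⟨by rw [mul_smul, hka], fun i hi => ?_⟩⟩
      rw [mul_smul, hg i hi, hk _ (mem_image_of_mem t hi)]

theorem mem_orbit_pi [Finite ι] (hG : IsOrbitwiseHighlyTransitive G α) {s t : ι → α}
    (horbit : ∀ i, t i ∈ orbit G (s i)) (hker : ∀ i j, s i = s j ↔ t i = t j) :
    t ∈ orbit G s := by
  cases nonempty_fintype ι
  obtain ⟨g, hg⟩ := hG.exists_smul_eq_on_finset horbit hker Finset.univ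
  exact ⟨g, funext fun i => hg i (Finset.mem_univ i)⟩

theorem exists_finset_orbit_representatives [Finite ι] (hG : IsOrbitwiseHighlyTransitive G α)
    (x : α) :
    ∃ T : Finset (ι → α), (∀ t ∈ T, ∀ i, t i ∈ orbit G x) ∧
      ∀ t : ι → α, (∀ i, t i ∈ orbit G x) → ∃ t' ∈ T, t ∈ orbit G t' := by
  let equalityPattern : (ι → α) → ι → ι → Prop := fun t i j => t i = t j
  obtain ⟨T, hTorbit, hT⟩ :=
    (surjOn_image equalityPattern {t | ∀ i, t i ∈ orbit G x}).exists_bijOn_subset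
  have hTfin : T.Finite := hT.finite_iff_finite.2 (toFinite _)
  refine ⟨hTfin.toFinset, fun t ht => hTorbit (hTfin.mem_toFinset.1 ht), fun t ht => ?_⟩
  obtain ⟨t', ht', hpattern⟩ := hT.surjOn (mem_image_of_mem equalityPattern ht)
  refine ⟨t', hTfin.mem_toFinset.2 ht', hG.mem_orbit_pi (fun i => ?_) fun i j => ?_⟩
  · rw [orbit_eq_iff.2 (hTorbit ht' i)]
    exact ht i
  · exact iff_of_eq (congrFun₂ hpattern i j)

end IsOrbitwiseHighlyTransitive

end OrbitwiseHighlyTransitive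

section Selectors

variable {X : Type*} [TopologicalSpace X]

theorem isLocallyConstant_piecewise {Y : Type*} {U : Set X} [∀ y, Decidable (y ∈ U)]
    (hU : IsClopen U) {f g : X → Y} (hf : IsLocallyConstant f) (hg : IsLocallyConstant g) :
    IsLocallyConstant (U.piecewise f g) := fun s => by
  rw [piecewise_preimage]
  exact ((hf s).inter hU.isOpen).union ((hg s).sdiff hU.isClosed)

theorem continuous_apply_of_isLocallyConstant {Y : Type*} [TopologicalSpace Y] {c : X → X ≃ₜ Y}
    (hc : IsLocallyConstant c) : Continuous fun y => c y y := by
  refine continuous_iff_continuousAt.2 fun y => (c y).continuous.continuousAt.congr ?_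
  filter_upwards [hc.eventually_eq y] with z hz
  rw [hz]

theorem isPiecewise_of_isLocallyConstant {W : Set (X ≃ₜ X)} {f : X ≃ₜ X} {c : X → X ≃ₜ X}
    (hc : IsLocallyConstant c) (hfin : (range c).Finite) (hW : ∀ y, c y ∈ W)
    (hf : ∀ y, f y = c y y) : IsPiecewise W f := by
  have := hfin.to_subtype
  obtain ⟨k, ⟨e⟩⟩ := Finite.exists_equiv_fin (range c)
  refine ⟨k, fun i => {y | c y = e.symm i}, fun i => hc.isClopen_fiber _, ?_, ?_, fun i => ?_⟩
  · exact iUnion_eq_univ_iff.2 fun y => ⟨e ⟨c y, mem_range_self y⟩, by simp⟩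
  · intro i j hij
    refine disjoint_left.2 fun y (hi : c y = _) (hj : c y = _) => hij ?_
    exact e.symm.injective (Subtype.ext (hi.symm.trans hj))
  · obtain ⟨y, hy⟩ := (e.symm i).2
    exact ⟨e.symm i, hy ▸ hW y, fun z (hz : c z = _) => by rw [hf, hz]⟩

end Selectors

section LocalSwap

variable {X : Type*} [TopologicalSpace X] {h : X ≃ₜ X} {U : Set X} {y : X}

open Classical in
/-- The homeomorphism which the local swap of `U` and `h '' U` agrees with near each point. -/
noncomputable def swapSelector (h : X ≃ₜ X) (U : Set X) : X → X ≃ₜ X :=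
  U.piecewise (fun _ => h) ((h '' U).piecewise (fun _ => h⁻¹) fun _ => 1)

theorem swapSelector_of_mem (hy : y ∈ U) : swapSelector h U y = h := by
  classical
  exact piecewise_eq_of_mem _ _ _ hy

theorem swapSelector_of_mem_image (hdisj : Disjoint U (h '' U)) (hy : y ∈ h '' U) :
    swapSelector h U y = h⁻¹ := by
  classical
  exact (piecewise_eq_of_notMem _ _ _ (hdisj.notMem_of_mem_right hy)).trans
    (piecewise_eq_of_mem _ _ _ hy)

theorem swapSelector_of_notMem (hyU : y ∉ U) (hyhU : y ∉ h '' U) : swapSelector h U y = 1 := by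
  classical
  exact (piecewise_eq_of_notMem _ _ _ hyU).trans (piecewise_eq_of_notMem _ _ _ hyhU)

theorem swapSelector_mem (h : X ≃ₜ X) (U : Set X) (y : X) :
    swapSelector h U y ∈ ({h, h⁻¹, 1} : Set (X ≃ₜ X)) := by
  unfold swapSelector piecewise
  split_ifs <;> simp

theorem isLocallyConstant_swapSelector (h : X ≃ₜ X) (hU : IsClopen U) :
    IsLocallyConstant (swapSelector h U) := by
  classical
  have hhU : IsClopen (h '' U) := ⟨h.isClosed_image.2 hU.isClosed, h.isOpen_image.2 hU.isOpen⟩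
  exact isLocallyConstant_piecewise hU (.const h) <|
    isLocallyConstant_piecewise hhU (.const h⁻¹) (.const 1)

theorem involutive_swapSelector_apply (hdisj : Disjoint U (h '' U)) :
    Function.Involutive fun y => swapSelector h U y y := by
  intro y
  dsimp only
  by_cases hyU : y ∈ U
  · rw [swapSelector_of_mem hyU, swapSelector_of_mem_image hdisj (mem_image_of_mem h hyU)]
    exact h.symm_apply_apply y
  by_cases hyhU : y ∈ h '' U
  · obtain ⟨z, hz, rfl⟩ := hyhU
    have hback : h⁻¹ (h z) = z := h.symm_apply_apply z
    rw [swapSelector_of_mem_image hdisj (mem_image_of_mem h hz), hback, swapSelector_of_mem hz]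
  · have hfix : swapSelector h U y y = y := by
      rw [swapSelector_of_notMem hyU hyhU]
      rfl
    rw [hfix, hfix]

/-- The involution that is `h` on the clopen set `U`, `h⁻¹` on `h '' U` and the identity
elsewhere. -/
noncomputable def localSwap (h : X ≃ₜ X) (hU : IsClopen U) (hdisj : Disjoint U (h '' U)) :
    X ≃ₜ X where
  toEquiv := (involutive_swapSelector_apply hdisj).toPerm
  continuous_toFun := continuous_apply_of_isLocallyConstant (isLocallyConstant_swapSelector h hU)
  continuous_invFun := continuous_apply_of_isLocallyConstant (isLocallyConstant_swapSelector h hU)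

theorem localSwap_apply (hU : IsClopen U) (hdisj : Disjoint U (h '' U)) (y : X) :
    localSwap h hU hdisj y = swapSelector h U y y :=
  rfl

theorem localSwap_apply_of_mem (hU : IsClopen U) (hdisj : Disjoint U (h '' U)) (hy : y ∈ U) :
    localSwap h hU hdisj y = h y := by
  rw [localSwap_apply, swapSelector_of_mem hy]

theorem localSwap_apply_of_notMem (hU : IsClopen U) (hdisj : Disjoint U (h '' U)) (hyU : y ∉ U)
    (hyhU : y ∉ h '' U) : localSwap h hU hdisj y = y := by
  rw [localSwap_apply, swapSelector_of_notMem hyU hyhU]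
  rfl

theorem isPiecewise_localSwap {H : Subgroup (X ≃ₜ X)} (hh : h ∈ H) (hU : IsClopen U)
    (hdisj : Disjoint U (h '' U)) : IsPiecewise (H : Set (X ≃ₜ X)) (localSwap h hU hdisj) := by
  have hsubset : ({h, h⁻¹, 1} : Set (X ≃ₜ X)) ⊆ H := by
    simp [insert_subset_iff, hh, H.one_mem]
  exact isPiecewise_of_isLocallyConstant (isLocallyConstant_swapSelector h hU)
    ((toFinite _).subset (range_subset_iff.2 (swapSelector_mem h U)))
    (fun y => hsubset (swapSelector_mem h U y)) (localSwap_apply hU hdisj)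

end LocalSwap

section ClopenSeparation

variable {X : Type*} [TopologicalSpace X] [TotallySeparatedSpace X] {F : Set X} {p : X}

theorem exists_isClopen_mem_disjoint_of_finite (hF : F.Finite) (hp : p ∉ F) :
    ∃ U : Set X, IsClopen U ∧ p ∈ U ∧ Disjoint U F := by
  have hsep : ∀ y ∈ F, ∃ C : Set X, IsClopen C ∧ p ∈ C ∧ y ∉ C := fun y hy =>
    exists_isClopen_of_totally_separated (ne_of_mem_of_not_mem hy hp).symm
  choose! C hC hpC hyC using hsep
  refine ⟨⋂ y ∈ F, C y, hF.isClopen_biInter hC, mem_iInter₂.2 hpC, ?_⟩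
  exact disjoint_left.2 fun y hyU hy => hyC y hy (mem_iInter₂.1 hyU y hy)

theorem exists_isClopen_mem_disjoint_image (h : X ≃ₜ X) (hF : F.Finite) (hp : p ∉ F)
    (hhp : h p ∉ F) (hne : p ≠ h p) :
    ∃ U : Set X, IsClopen U ∧ p ∈ U ∧ Disjoint U (h '' U) ∧ Disjoint U F ∧
      Disjoint (h '' U) F := by
  obtain ⟨A, hA, hpA, hAF⟩ :=
    exists_isClopen_mem_disjoint_of_finite (hF.insert (h p)) (not_or_intro hne hp)
  obtain ⟨B, hB, hpB, hBF⟩ := exists_isClopen_mem_disjoint_of_finite hF hhp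
  rw [disjoint_insert_right] at hAF
  have himage : h '' (A ∩ h ⁻¹' (B \ A)) ⊆ B \ A := image_subset_iff.2 inter_subset_right
  exact ⟨A ∩ h ⁻¹' (B \ A), hA.inter ((hB.diff hA).preimage h.continuous),
    ⟨hpA, hpB, hAF.1⟩, disjoint_sdiff_right.mono inter_subset_left himage,
    hAF.2.mono_left inter_subset_left, hBF.mono_left (himage.trans sdiff_subset)⟩

end ClopenSeparation

section FullGroup

variable {X : Type*} [TopologicalSpace X] {H : Subgroup (X ≃ₜ X)}

/-- The tautological action of the homeomorphism group `homeoGroup` on the space. -/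
instance homeoMulAction : MulAction (X ≃ₜ X) X where
  smul f y := f y
  one_smul _ := rfl
  mul_smul _ _ _ := rfl

theorem mem_orbit_homeo_iff {x y : X} : y ∈ orbit H x ↔ ∃ h ∈ H, h x = y :=
  ⟨fun ⟨h, hx⟩ => ⟨h, h.2, hx⟩, fun ⟨h, hh, hx⟩ => ⟨⟨h, hh⟩, hx⟩⟩

theorem mem_orbit_pi_homeo_iff {ι : Type*} {s t : ι → X} :
    t ∈ orbit H s ↔ ∃ h ∈ H, ∀ i, h (s i) = t i :=
  ⟨fun ⟨h, hs⟩ => ⟨h, h.2, congrFun hs⟩, fun ⟨h, hh, hs⟩ => ⟨⟨h, hh⟩, funext hs⟩⟩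

/-- A full group of homeomorphisms: one that contains every homeomorphism piecewise in it. -/
def IsFullGroup (H : Subgroup (X ≃ₜ X)) : Prop :=
  ∀ f : X ≃ₜ X, IsPiecewise (H : Set (X ≃ₜ X)) f → f ∈ H

theorem IsFullGroup.isOrbitwiseHighlyTransitive [TotallySeparatedSpace X] (hH : IsFullGroup H) :
    IsOrbitwiseHighlyTransitive H X := by
  intro F hF p q hq hp hqF
  obtain ⟨h, hh, rfl⟩ := mem_orbit_homeo_iff.1 hq
  by_cases hne : p = h p
  · rw [← hne]
    exact mem_orbit_self p
  obtain ⟨U, hU, hpU, hdisj, hUF, hhUF⟩ := exists_isClopen_mem_disjoint_image h hF hp hqF hne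
  have hswap : localSwap h hU hdisj ∈ H := hH _ (isPiecewise_localSwap hh hU hdisj)
  have hfix : (⟨localSwap h hU hdisj, hswap⟩ : H) ∈ fixingSubgroup H F :=
    (mem_fixingSubgroup_iff H).2 fun y hy => localSwap_apply_of_notMem hU hdisj
      (hUF.notMem_of_mem_right hy) (hhUF.notMem_of_mem_right hy)
  exact ⟨⟨_, hfix⟩, localSwap_apply_of_mem hU hdisj hpU⟩

theorem full_group_acts_oligomorphically_on_orbit_general [TotallySeparatedSpace X]
    (hH : IsFullGroup H) (x : X) (ι : Type*) [Finite ι] :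
    ∃ T : Finset (ι → X),
      (∀ t ∈ T, ∀ i, ∃ h ∈ H, h x = t i) ∧
      ∀ t : ι → X, (∀ i, ∃ h ∈ H, h x = t i) →
        ∃ t' ∈ T, ∃ h ∈ H, ∀ i, h (t' i) = t i := by
  simpa only [mem_orbit_homeo_iff, mem_orbit_pi_homeo_iff] using
    hH.isOrbitwiseHighlyTransitive.exists_finset_orbit_representatives (ι := ι) x

end FullGroup

/-!
Any full group of homeomorphisms of a Cantor space acts oligomorphically on any one
of its orbits: if `X` is a nonempty compact metrizable totally disconnected space
without isolated points, `H` is a full group of homeomorphisms of `X`, and `O` is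
the `H`-orbit of a point `x`, then for every `k ≥ 1` the diagonal action of `H` on
`O^k` has finitely many orbits, i.e. some finite set of `k`-tuples from `O` meets
every `H`-orbit of `k`-tuples from `O`.
-/
theorem full_group_acts_oligomorphically_on_orbit (X : Type*) [TopologicalSpace X]
    [Nonempty X] [CompactSpace X] [TopologicalSpace.MetrizableSpace X]
    [TotallyDisconnectedSpace X]
    (hiso : ∀ x : X, ¬ IsOpen ({x} : Set X))
    (H : Subgroup (X ≃ₜ X))
    (hfull : ∀ f : X ≃ₜ X, IsPiecewise (H : Set (X ≃ₜ X)) f → f ∈ H)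
    (x : X) (k : ℕ) (hk : 1 ≤ k) :
    ∃ T : Finset (Fin k → X),
      (∀ t ∈ T, ∀ i, ∃ h ∈ H, (h : X ≃ₜ X) x = t i) ∧
      ∀ t : Fin k → X, (∀ i, ∃ h ∈ H, (h : X ≃ₜ X) x = t i) →
        ∃ t' ∈ T, ∃ h ∈ H, ∀ i, (h : X ≃ₜ X) (t' i) = t i := by
  exact full_group_acts_oligomorphically_on_orbit_general hfull x (Fin k)
end

section
/- Brouwer's characterization of the Cantor space: Every nonempty, compact, metrizable, totally disconnected topological space without isolated points is homeomorphic to the Cantor space 𝔠 = ℕ → Bool (with the product topology). -/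
/-!
Encode a point by an infinite sequence of binary digits, each digit a locally constant function
chosen after the preceding ones. The finitely many digits chosen so far cut the space into open
fibres. Since no point is isolated, each nonempty fibre has two points, hence is split by some
locally constant function, so the next digit can be chosen to take both values on every fibre.
It can moreover be chosen so that the digits determine the value of a prescribed locally constant
`c n : X → Bool`: where `c n` already splits a fibre it serves as the digit itself. Taking `c` to
enumerate the countably many locally constant functions makes the encoding injective, and
compactness makes it surjective, because every finite word is realized.
-/

open Set Function PiNat

lemma surjOn_univ_bool_of_ne {α : Type*} {e : α → Bool} {A : Set α} {x y : α} (hx : x ∈ A)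
    (hy : y ∈ A) (hxy : e x ≠ e y) : SurjOn e A univ := by
  intro b _
  by_cases hb : e x = b
  · exact ⟨x, hx, hb⟩
  · exact ⟨y, hy, (Bool.eq_not_of_ne hxy.symm).trans (Bool.eq_not_of_ne (Ne.symm hb)).symm⟩

section Splitting

variable {X Y : Type*} [TopologicalSpace X] [TotallySeparatedSpace X]

lemma exists_locallyConstant_bool_ne {x y : X} (hxy : x ≠ y) :
    ∃ e : LocallyConstant X Bool, e x ≠ e y := by
  obtain ⟨U, hU, hxU, hyU⟩ := exists_isClopen_of_totally_separated hxy
  have hcont : Continuous U.boolIndicator := (continuous_boolIndicator_iff_isClopen U).2 hU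
  refine ⟨⟨U.boolIndicator, (IsLocallyConstant.iff_continuous _).2 hcont⟩, ?_⟩
  change U.boolIndicator x ≠ U.boolIndicator y
  rw [(U.mem_iff_boolIndicator x).1 hxU, (U.notMem_iff_boolIndicator y).1 hyU]
  decide

variable [PerfectSpace X]

lemma exists_splitting_determining (c : LocallyConstant X Bool) {A : Set X} (hA : IsOpen A)
    (hne : A.Nonempty) :
    ∃ e : LocallyConstant X Bool,
      SurjOn e A univ ∧ ∀ x ∈ A, ∀ y ∈ A, e x = e y → c x = c y := by
  by_cases hc : ∀ x ∈ A, ∀ y ∈ A, c x = c y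
  · obtain ⟨a, ha⟩ := hne
    obtain ⟨x, hx, y, hy, hxy⟩ := (infinite_of_mem_nhds a (hA.mem_nhds ha)).nontrivial
    obtain ⟨e, he⟩ := exists_locallyConstant_bool_ne hxy
    exact ⟨e, surjOn_univ_bool_of_ne hx hy he, fun x hx y hy _ ↦ hc x hx y hy⟩
  · push Not at hc
    obtain ⟨x, hx, y, hy, hxy⟩ := hc
    exact ⟨c, surjOn_univ_bool_of_ne hx hy hxy, fun _ _ _ _ h ↦ h⟩

lemma exists_fiberwise_splitting_determining (c : LocallyConstant X Bool)
    (g : LocallyConstant X Y) :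
    ∃ d : LocallyConstant X Bool, (∀ x, SurjOn d (g ⁻¹' {g x}) univ) ∧
      ∀ x y, g x = g y → d x = d y → c x = c y := by
  choose! e he_surj he_det using fun (y : Y) (hy : (g ⁻¹' {y}).Nonempty) ↦
    exists_splitting_determining c (g.isLocallyConstant.isOpen_fiber y) hy
  have hd : IsLocallyConstant fun x ↦ e (g x) x := by
    refine (IsLocallyConstant.iff_eventually_eq _).2 fun x ↦ ?_
    filter_upwards [g.isLocallyConstant.eventually_eq x,
      (e (g x)).isLocallyConstant.eventually_eq x] with y hg he
    calc
      e (g y) y = e (g x) y := congrArg (e · y) hg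
      _ = e (g x) x := he
  refine ⟨⟨_, hd⟩, fun x b _ ↦ ?_, fun x y hg hd ↦ ?_⟩
  · obtain ⟨y, hy, rfl⟩ := he_surj (g x) ⟨x, rfl⟩ (mem_univ b)
    exact ⟨y, hy, congrArg (e · y) hy⟩
  · refine he_det (g x) ⟨x, rfl⟩ x rfl y hg.symm ?_
    exact hd.trans (congrArg (e · y) hg.symm)

end Splitting

lemma dense_of_forall_cylinder_inter_nonempty {E : ℕ → Type*} [∀ n, TopologicalSpace (E n)]
    [∀ n, DiscreteTopology (E n)] {S : Set (∀ n, E n)}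
    (hS : ∀ s n, (cylinder s n ∩ S).Nonempty) : Dense S := by
  refine (isTopologicalBasis_cylinders E).dense_iff.2 ?_
  rintro _ ⟨s, n, rfl⟩ -
  exact hS s n

section DigitExpansion

variable {X β : Type*} [TopologicalSpace X]
  (δ : ℕ → LocallyConstant X (List β) → LocallyConstant X β)

/-- The word of the first `n` digits of a point, where the rule `δ` produces the digit function
number `n` from the function giving the word of all earlier digits. As in `PiNat.res`, the most
recent digit comes first. -/
def digitWord : ℕ → LocallyConstant X (List β)
  | 0 => .const X []
  | n + 1 => ⟨fun x ↦ δ n (digitWord n) x :: digitWord n x,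
      (δ n (digitWord n)).isLocallyConstant.comp₂ (digitWord n).isLocallyConstant List.cons⟩

/-- The infinite sequence of digits that the rule `δ` assigns to a point. -/
def digitExpansion (x : X) (n : ℕ) : β :=
  δ n (digitWord δ n) x

lemma res_digitExpansion (x : X) (n : ℕ) : res (digitExpansion δ x) n = digitWord δ n x := by
  induction n with
  | zero => rfl
  | succ n ih => rw [res_succ, ih]; rfl

lemma continuous_digitExpansion [TopologicalSpace β] : Continuous (digitExpansion δ) :=
  continuous_pi fun n ↦ (δ n (digitWord δ n)).continuous

variable {δ}

lemma digitExpansion_injective {γ : Type*} {c : ℕ → X → γ}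
    (hδ : ∀ n g x y, g x = g y → δ n g x = δ n g y → c n x = c n y)
    (hc : ∀ x y, x ≠ y → ∃ n, c n x ≠ c n y) : Injective (digitExpansion δ) := by
  intro x y hxy
  by_contra hne
  obtain ⟨n, hn⟩ := hc x y hne
  have hword : digitWord δ n x = digitWord δ n y := by
    rw [← res_digitExpansion, hxy, res_digitExpansion]
  exact hn (hδ n _ x y hword (congrFun hxy n))

lemma exists_digitWord_eq_res [Nonempty X]
    (hδ : ∀ n g x, SurjOn (δ n g) (g ⁻¹' {g x}) univ) (s : ℕ → β) (n : ℕ) :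
    ∃ x, digitWord δ n x = res s n := by
  induction n with
  | zero => exact ⟨Classical.arbitrary X, rfl⟩
  | succ n ih =>
    obtain ⟨x, hx⟩ := ih
    obtain ⟨y, hyx, hy⟩ := hδ n (digitWord δ n) x (mem_univ (s n))
    exact ⟨y, congrArg₂ List.cons hy (hyx.trans hx)⟩

lemma digitExpansion_surjective [Nonempty X] [CompactSpace X]
    (hδ : ∀ n g x, SurjOn (δ n g) (g ⁻¹' {g x}) univ) : Surjective (digitExpansion δ) := by
  let : TopologicalSpace β := ⊥
  have : DiscreteTopology β := ⟨rfl⟩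
  have hdense : DenseRange (digitExpansion δ) := by
    refine dense_of_forall_cylinder_inter_nonempty fun s n ↦ ?_
    obtain ⟨x, hx⟩ := exists_digitWord_eq_res hδ s n
    refine ⟨digitExpansion δ x, ?_, x, rfl⟩
    rw [cylinder_eq_res]
    exact (res_digitExpansion δ x n).trans hx
  have hclosed : IsClosed (range (digitExpansion δ)) :=
    (isCompact_range (continuous_digitExpansion δ)).isClosed
  exact range_eq_univ.1 (hclosed.closure_eq.symm.trans hdense.closure_range)

end DigitExpansion

lemma countable_locallyConstant_bool (X : Type*) [TopologicalSpace X] [CompactSpace X]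
    [T2Space X] [TotallyDisconnectedSpace X] [SecondCountableTopology X] :
    Countable (LocallyConstant X Bool) := by
  classical
  have : Countable (TopologicalSpace.Clopens X) :=
    TopologicalSpace.Clopens.countable_iff_secondCountable.2 inferInstance
  exact .of_equiv _
    ((LocallyConstant.equivClopens X).symm.trans (LocallyConstant.congrRight finTwoEquiv))

/-!
Brouwer's characterization of the Cantor space: every nonempty, compact,
metrizable, totally disconnected topological space without isolated points is
homeomorphic to the Cantor space `ℕ → Bool` (with the product topology).
-/
theorem brouwer_characterization_of_cantor_space (X : Type*) [TopologicalSpace X]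
    [Nonempty X] [CompactSpace X] [TopologicalSpace.MetrizableSpace X]
    [TotallyDisconnectedSpace X]
    (hiso : ∀ x : X, ¬ IsOpen ({x} : Set X)) :
    Nonempty (X ≃ₜ (ℕ → Bool)) := by
  have : PerfectSpace X := perfectSpace_iff_forall_not_isolated.2 fun x ↦
    ⟨fun h ↦ hiso x ((isOpen_singleton_iff_punctured_nhds x).2 h)⟩
  have := countable_locallyConstant_bool X
  obtain ⟨c, hc⟩ := exists_surjective_nat (LocallyConstant X Bool)
  have hc_sep : ∀ x y, x ≠ y → ∃ n, c n x ≠ c n y := fun x y hxy ↦ by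
    obtain ⟨e, he⟩ := exists_locallyConstant_bool_ne hxy
    obtain ⟨n, rfl⟩ := hc e
    exact ⟨n, he⟩
  choose δ hδ_surj hδ_det using fun n (g : LocallyConstant X (List Bool)) ↦
    exists_fiberwise_splitting_determining (c n) g
  have hbij : Bijective (digitExpansion δ) :=
    ⟨digitExpansion_injective hδ_det hc_sep, digitExpansion_surjective hδ_surj⟩
  exact ⟨(continuous_digitExpansion δ).homeoOfEquivCompactToT2 (f := .ofBijective _ hbij)⟩
end
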